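/- arXiv:1709.02006 — 3 statements merged into one kernel-verified Lean document; each statement's English description precedes it below -/
import Mathlib

section
/- With C = u²v²w²μ³, the field K_C is k-rational (the del Pezzo surface of degree 2 given by A x⁴ + 2B x²y² + A y⁴ + C z⁴ = t² is k-rational). -/
/-!
Write `Q = w²x² + (u² - v²)y²`, `a = u + iv`, `b = u - iv`, so that `ab = w²`. The equation of the
surface, multiplied by `w²`, reads `(wt)² - α² = μ (Q - e)(Q + e)` with `α = 2iuvμwy` and
`e = 2iuv(y² + w²μ/2)`, a factorization special to the value `C = u²v²w²μ³`. Hence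
`s = (α - wt) / (μ (Q - e))` satisfies two equations which, for fixed `s`, are linear in `wt` and
`Q` (the hypotheses `h1` and `h2` below); eliminating `t` leaves a conic over `k(s)`, so the
surface is birationally a conic bundle over the `s`-line. With `T = μs²` and
`wY = (a² - b²T)y + 2iuvμws` this conic becomes (`conic_eq`)

  `Y² - (a² - b²T)(T - 1)x² = iuvμ(b²T² - a²)`.

It has an explicit `k(s)`-point (`conic_point`), and projection from this point, with slope `r`,
expresses `x, y, t` rationally in `s, r` (`conic_param`, `exists_parameter`). So `K = k(s, r)`, and
since `K` has transcendence degree 2 over `k`, the pair `s, r` is a transcendence basis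
(`rational_of_adjoin_pair`).

The conic is nondegenerate as soon as `T` avoids a few constants; `s²` is never a constant, since
otherwise `t` would lie in `k(x, y)` (`not_const`).
-/

/-- A field extension `K` of `k` (of transcendence degree 2) is *k-rational* if it is
isomorphic as a `k`-algebra to the field of rational functions in two variables over `k`. -/
def IsKRational (k : Type*) (K : Type*) [Field k] [Field K] [Algebra k K] : Prop :=
  Nonempty (K ≃ₐ[k] FractionRing (MvPolynomial (Fin 2) k))

open IntermediateField in
/-- If `K` has transcendence degree at least two (witnessed by `x, y`), then two generators of `K`
are automatically algebraically independent, and `K` is a rational function field in them. -/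
theorem rational_of_adjoin_pair {k K : Type*} [Field k] [Field K] [Algebra k K] {x y s r : K}
    (hind : AlgebraicIndependent k ![x, y]) (h : adjoin k {s, r} = ⊤) :
    Nonempty (K ≃ₐ[k] FractionRing (MvPolynomial (Fin 2) k)) := by
  have hr : Set.range ![s, r] = {s, r} := by
    rw [Matrix.range_cons, Matrix.range_cons, Matrix.range_empty, Set.union_empty,
      Set.singleton_union]
  rw [← hr] at h
  have alg : Algebra.IsAlgebraic (Algebra.adjoin k (Set.range ![s, r])) K := by
    refine ⟨fun z => ?_⟩
    have hz : z ∈ adjoin k (Set.range ![s, r]) := h ▸ mem_top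
    obtain ⟨p, hp, q, hq, rfl⟩ := (mem_adjoin_iff_div ..).1 hz
    have h1 := isAlgebraic_algebraMap (A := K) (⟨p, hp⟩ : Algebra.adjoin k (Set.range ![s, r]))
    have h2 := isAlgebraic_algebraMap (A := K) (⟨q, hq⟩ : Algebra.adjoin k (Set.range ![s, r]))
    rw [div_eq_mul_inv]
    exact h1.mul h2.inv
  have hb := Algebra.IsAlgebraic.isTranscendenceBasis_of_lift_le_trdeg_of_finite k ![s, r]
    hind.lift_cardinalMk_le_trdeg
  exact ⟨((hb.1.aevalEquivField.trans (equivOfEq h)).trans topEquiv).symm⟩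

/-- The generic conic has the point `x = (p0 + p2 T) / s`, `Y = (i a p0 + y2 T + i b p2 T²) / s`;
the identity is the equation of the conic multiplied by `s²`, with `T = μ s²`. The ansatz makes
the extreme coefficients in `T` agree and leaves three equations for `p0, p2, y2`. -/
theorem conic_point {K : Type*} [Field K] [CharZero K] (i u v w T a b p0 p2 y2 : K)
    (hi : i ^ 2 = -1) (h : w ^ 2 = u ^ 2 + v ^ 2) (ha : a = u + i * v) (hb : b = u - i * v)
    (hvw : v - w ≠ 0)
    (hp0 : 4 * (v - w) * p0 = (1 + i) * a * (v - u - w))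
    (hp2 : 4 * (v - w) * p2 = (1 + i) * b * (w - u - v))
    (hy2 : 2 * (v - w) * y2 = i * (1 + i) * w * u * (w - 2 * v)) :
    T * (i * u * v) * (b ^ 2 * T ^ 2 - a ^ 2) + (a ^ 2 - b ^ 2 * T) * (T - 1) * (p0 + p2 * T) ^ 2
      = (i * a * p0 + y2 * T + i * b * p2 * T ^ 2) ^ 2 := by
  have e : 16 * (v - w) ^ 2 ≠ 0 := by simp [hvw]
  -- `c1`, `c2`, `c3` compare the coefficients of `T`, `T ^ 2`, `T ^ 3`
  have c1 : -(i * u * v) * a ^ 2 - 2 * a ^ 2 * p0 * p2 + (a ^ 2 + b ^ 2) * p0 ^ 2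
      = 2 * (i * a * p0) * y2 := by
    apply mul_left_cancel₀ e
    trans -(16 * (v - w) ^ 2 * i * u * v) * a ^ 2
      - 2 * a ^ 2 * (4 * (v - w) * p0) * (4 * (v - w) * p2)
      + (a ^ 2 + b ^ 2) * (4 * (v - w) * p0) ^ 2
    · ring
    trans 4 * (i * a * (4 * (v - w) * p0)) * (2 * (v - w) * y2)
    · rw [hp0, hp2, hy2]
      clear * - hi h ha hb
      grind
    · ring
  have c3 : (i * u * v) * b ^ 2 - 2 * b ^ 2 * p0 * p2 + (a ^ 2 + b ^ 2) * p2 ^ 2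
      = 2 * (i * b * p2) * y2 := by
    apply mul_left_cancel₀ e
    trans (16 * (v - w) ^ 2 * i * u * v) * b ^ 2
      - 2 * b ^ 2 * (4 * (v - w) * p0) * (4 * (v - w) * p2)
      + (a ^ 2 + b ^ 2) * (4 * (v - w) * p2) ^ 2
    · ring
    trans 4 * (i * b * (4 * (v - w) * p2)) * (2 * (v - w) * y2)
    · rw [hp0, hp2, hy2]
      clear * - hi h ha hb
      grind
    · ring
  have c2 : -a ^ 2 * p2 ^ 2 + 2 * (a ^ 2 + b ^ 2) * p0 * p2 - b ^ 2 * p0 ^ 2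
      = y2 ^ 2 - 2 * a * b * p0 * p2 := by
    apply mul_left_cancel₀ e
    trans -a ^ 2 * (4 * (v - w) * p2) ^ 2
      + 2 * (a ^ 2 + b ^ 2) * (4 * (v - w) * p0) * (4 * (v - w) * p2)
      - b ^ 2 * (4 * (v - w) * p0) ^ 2
    · ring
    trans 4 * (2 * (v - w) * y2) ^ 2 - 2 * a * b * (4 * (v - w) * p0) * (4 * (v - w) * p2)
    · rw [hp0, hp2, hy2]
      clear * - hi h ha hb
      grind
    · ring
  linear_combination T * c1 + T ^ 2 * c2 + T ^ 3 * c3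
    - (a ^ 2 * p0 ^ 2 + b ^ 2 * p2 ^ 2 * T ^ 4 + 2 * a * b * p0 * p2 * T ^ 2) * hi

/-- The second of the two relations linear in `wt` and `Q = w²x² + (u² - v²)y²`. It is where the
equation of the surface enters; the first one is the definition of `s`. -/
theorem second_relation {K : Type*} [Field K] [CharZero K] {i u v w μ x y t s α β : K}
    (hi : i ^ 2 = -1) (huvw : w ^ 2 = u ^ 2 + v ^ 2)
    (hrel : t ^ 2 = w ^ 2 * μ * x ^ 4 + 2 * ((u ^ 2 - v ^ 2) * μ) * x ^ 2 * y ^ 2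
      + w ^ 2 * μ * y ^ 4 + u ^ 2 * v ^ 2 * w ^ 2 * μ ^ 3)
    (hβ0 : β ≠ 0) (hα : α = 2 * i * u * v * μ * w * y)
    (hβ : β = μ * (w ^ 2 * x ^ 2 + (u ^ 2 - v ^ 2 - 2 * i * u * v) * y ^ 2
      - i * u * v * w ^ 2 * μ))
    (hs : w * t = α - s * β) :
    -(w ^ 2 * x ^ 2 + (u ^ 2 - v ^ 2) * y ^ 2) - s * (w * t)
      = 2 * i * u * v * (y ^ 2 + w ^ 2 * μ / 2 + μ * w * s * y) := by
  apply mul_right_cancel₀ hβ0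
  linear_combination
    -(w ^ 2 * x ^ 2 + (u ^ 2 - v ^ 2) * y ^ 2 + 2 * i * u * v * (y ^ 2 + w ^ 2 * μ / 2)) * hβ
    - (w * t + 2 * i * u * v * μ * w * y) * hs
    - (w * t + 2 * i * u * v * μ * w * y) * hα + w ^ 2 * hrel
    + 4 * u ^ 2 * v ^ 2 * μ * (y ^ 4 + w ^ 4 * μ ^ 2 / 4) * hi
    + μ * y ^ 4 * (w ^ 2 + u ^ 2 + v ^ 2) * huvw

/-- Eliminating `t` from the two linear relations and completing the square in `y` gives a diagonal
conic in `x` and `Y`. -/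
theorem conic_eq {K : Type*} [Field K] [CharZero K] {i u v w μ x y t s a b Y : K}
    (hi : i ^ 2 = -1) (hw : w ≠ 0)
    (ha : a = u + i * v) (hb : b = u - i * v)
    (h1 : w * t + μ * s * (w ^ 2 * x ^ 2 + (u ^ 2 - v ^ 2) * y ^ 2)
      = 2 * i * u * v * μ * (w * y + s * (y ^ 2 + w ^ 2 * μ / 2)))
    (h2 : -(w ^ 2 * x ^ 2 + (u ^ 2 - v ^ 2) * y ^ 2) - s * (w * t)
      = 2 * i * u * v * (y ^ 2 + w ^ 2 * μ / 2 + μ * w * s * y))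
    (hY : w * Y = (a ^ 2 - b ^ 2 * (μ * s ^ 2)) * y + 2 * i * u * v * μ * w * s) :
    Y ^ 2 - (a ^ 2 - b ^ 2 * (μ * s ^ 2)) * (μ * s ^ 2 - 1) * x ^ 2
      = i * u * v * μ * (b ^ 2 * (μ * s ^ 2) ^ 2 - a ^ 2) := by
  have hN : a ^ 2 - b ^ 2 * (μ * s ^ 2) = 2 * i * u * v * (1 + μ * s ^ 2)
      - (u ^ 2 - v ^ 2) * (μ * s ^ 2 - 1) := by
    rw [ha, hb]; linear_combination (v ^ 2 - v ^ 2 * (μ * s ^ 2)) * hi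
  have h3 : (μ * s ^ 2 - 1) * (w ^ 2 * x ^ 2) = (a ^ 2 - b ^ 2 * (μ * s ^ 2)) * y ^ 2
      + 4 * i * u * v * μ * w * s * y + i * u * v * (1 + μ * s ^ 2) * w ^ 2 * μ := by
    rw [hN]; linear_combination s * h1 + h2
  have hab : a ^ 2 - b ^ 2 = 4 * i * u * v := by rw [ha, hb]; ring
  apply mul_left_cancel₀ (pow_ne_zero 2 hw)
  linear_combination (w * Y + ((a ^ 2 - b ^ 2 * (μ * s ^ 2)) * y + 2 * i * u * v * μ * w * s)) * hY
    - (a ^ 2 - b ^ 2 * (μ * s ^ 2)) * h3 - i * u * v * μ * w ^ 2 * (μ * s ^ 2) * hab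

/-- If `τ` is quadratic over `F` and `τ = α - s β` with `α, β ∈ F` nonzero, then `s²` is not a
constant: `τ² = α² - 2 α β s + β² s²` would put `s`, and then `τ`, into `F`. -/
theorem not_const {k K : Type*} [Field k] [CharZero k] [Field K] [Algebra k K]
    (F : IntermediateField k K) {α β τ s : K} (hα : α ∈ F) (hβ : β ∈ F) (hα0 : α ≠ 0) (hβ0 : β ≠ 0)
    (hτ2 : τ ^ 2 ∈ F) (hτ : τ ∉ F) (h : τ = α - s * β) (d : k) : s ^ 2 ≠ algebraMap k K d := by
  intro hd
  have : CharZero K := charZero_of_injective_algebraMap (algebraMap k K).injective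
  have hs : s = (α ^ 2 + β ^ 2 * algebraMap k K d - τ ^ 2) / (2 * α * β) := by
    rw [← hd, h]; field_simp; ring
  have hsF : s ∈ F := by
    rw [hs]
    exact div_mem (sub_mem (add_mem (pow_mem hα 2) (mul_mem (pow_mem hβ 2) (F.algebraMap_mem d)))
      hτ2) (mul_mem (mul_mem (ofNat_mem F 2) hα) hβ)
  exact hτ (h ▸ sub_mem hα (mul_mem hsF hβ))

/-- Stereographic projection of the conic `Y² - N x² = M` from its point `(x0, Y0)`, with `r` the
slope of the line joining `(x0, Y0)` to `(x, Y)`. The second alternative covers points with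
`x = x0`, where the slope is undefined. -/
theorem conic_param {K : Type*} [Field K] [CharZero K] {N M x Y x0 Y0 : K}
    (h : Y ^ 2 - N * x ^ 2 = M) (h0 : Y0 ^ 2 - N * x0 ^ 2 = M) (hM : M ≠ 0) (hN : N ≠ 0) :
    ∃ r : K, x = x0 + 2 * (N * x0 - Y0 * r) / (r ^ 2 - N) ∧ Y = Y0 + r * (x - x0) ∨
      (x = x0 ∧ (Y = Y0 ∨ Y = -Y0)) := by
  by_cases hx : x = x0
  · refine ⟨0, Or.inr ⟨hx, ?_⟩⟩
    subst hx
    rw [← sq_eq_sq_iff_eq_or_eq_neg]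
    linear_combination h - h0
  have hd : x - x0 ≠ 0 := sub_ne_zero.2 hx
  obtain ⟨r, hr⟩ : ∃ r, r = (Y - Y0) / (x - x0) := ⟨_, rfl⟩
  have hY : Y = Y0 + r * (x - x0) := by rw [hr]; field_simp; ring
  have hlin : (x - x0) * (r ^ 2 - N) = 2 * (N * x0 - Y0 * r) := by
    apply mul_left_cancel₀ hd
    rw [hY] at h
    linear_combination h - h0
  have hrN : r ^ 2 - N ≠ 0 := by
    intro h'
    rw [h', mul_zero] at hlin
    have h2 : N * x0 = Y0 * r := by
      apply mul_left_cancel₀ (two_ne_zero (α := K)); linear_combination -hlin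
    apply hM
    apply mul_left_cancel₀ hN
    rw [← h0]
    linear_combination - (N * x0 + Y0 * r) * h2 - Y0 ^ 2 * h'
  refine ⟨r, Or.inl ⟨?_, hY⟩⟩
  rw [← hlin]; field_simp; ring

/-- There is a single `r` such that `x, y, t` are rational expressions in `s`, `r` and the constants.
The conditions on `T = μ s²` make the generic conic nondegenerate. -/
theorem exists_parameter (k : Type*) {K : Type*} [Field k] [Field K] [Algebra k K] [CharZero K]
    {i u v w μ x y t s : K}
    (hi : i ^ 2 = -1) (h : w ^ 2 = u ^ 2 + v ^ 2) (hw : w ≠ 0) (hvw : v - w ≠ 0) (hμ : μ ≠ 0)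
    (hi0 : i ≠ 0) (hu : u ≠ 0) (hv : v ≠ 0) (hb : u - i * v ≠ 0) (hs : s ≠ 0)
    (hT1 : μ * s ^ 2 ≠ 1) (hT2 : μ * s ^ 2 ≠ (u + i * v) ^ 2 / (u - i * v) ^ 2)
    (hT3 : μ * s ^ 2 ≠ (u + i * v) / (u - i * v))
    (hT4 : μ * s ^ 2 ≠ -((u + i * v) / (u - i * v)))
    (h1 : w * t + μ * s * (w ^ 2 * x ^ 2 + (u ^ 2 - v ^ 2) * y ^ 2)
      = 2 * i * u * v * μ * (w * y + s * (y ^ 2 + w ^ 2 * μ / 2)))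
    (h2 : -(w ^ 2 * x ^ 2 + (u ^ 2 - v ^ 2) * y ^ 2) - s * (w * t)
      = 2 * i * u * v * (y ^ 2 + w ^ 2 * μ / 2 + μ * w * s * y)) :
    ∃ r : K, ∀ E : IntermediateField k K, i ∈ E → u ∈ E → v ∈ E → w ∈ E → μ ∈ E → s ∈ E → r ∈ E →
      x ∈ E ∧ y ∈ E ∧ t ∈ E := by
  obtain ⟨a, ha⟩ : ∃ a, a = u + i * v := ⟨_, rfl⟩
  obtain ⟨b, hb'⟩ : ∃ b, b = u - i * v := ⟨_, rfl⟩
  rw [← ha, ← hb'] at hT2 hT3 hT4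
  rw [← hb'] at hb
  obtain ⟨T, hT⟩ : ∃ T, T = μ * s ^ 2 := ⟨_, rfl⟩
  obtain ⟨Y, hY⟩ : ∃ Y, Y = ((a ^ 2 - b ^ 2 * (μ * s ^ 2)) * y + 2 * i * u * v * μ * w * s) / w :=
    ⟨_, rfl⟩
  have hY' : w * Y = (a ^ 2 - b ^ 2 * (μ * s ^ 2)) * y + 2 * i * u * v * μ * w * s := by
    rw [hY]; field_simp
  have hconic := conic_eq hi hw ha hb' h1 h2 hY'
  rw [← hT] at hconic hT1 hT2 hT3 hT4 hY'
  have hN0 : a ^ 2 - b ^ 2 * T ≠ 0 := by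
    intro h0; apply hT2; field_simp; linear_combination -h0
  have hN : (a ^ 2 - b ^ 2 * T) * (T - 1) ≠ 0 := mul_ne_zero hN0 (sub_ne_zero.2 hT1)
  have hM : i * u * v * μ * (b ^ 2 * T ^ 2 - a ^ 2) ≠ 0 := by
    refine mul_ne_zero (by simp [hi0, hu, hv, hμ]) ?_
    have e : b ^ 2 * T ^ 2 - a ^ 2 = (b * T - a) * (b * T + a) := by ring
    rw [e]
    refine mul_ne_zero (fun h0 => hT3 ?_) (fun h0 => hT4 ?_)
    · field_simp; linear_combination h0
    · field_simp; linear_combination h0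
  obtain ⟨p0, hp0⟩ : ∃ p, p = (1 + i) * a * (v - u - w) / (4 * (v - w)) := ⟨_, rfl⟩
  obtain ⟨p2, hp2⟩ : ∃ p, p = (1 + i) * b * (w - u - v) / (4 * (v - w)) := ⟨_, rfl⟩
  obtain ⟨y2, hy2⟩ : ∃ p, p = i * (1 + i) * w * u * (w - 2 * v) / (2 * (v - w)) := ⟨_, rfl⟩
  have hpt := conic_point i u v w T a b p0 p2 y2 hi h ha hb' hvw
    (by rw [hp0]; field_simp) (by rw [hp2]; field_simp) (by rw [hy2]; field_simp)
  obtain ⟨x0, hx0⟩ : ∃ p, p = (p0 + p2 * T) / s := ⟨_, rfl⟩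
  obtain ⟨Y0, hY0⟩ : ∃ p, p = (i * a * p0 + y2 * T + i * b * p2 * T ^ 2) / s := ⟨_, rfl⟩
  have hpt' : Y0 ^ 2 - (a ^ 2 - b ^ 2 * T) * (T - 1) * x0 ^ 2
      = i * u * v * μ * (b ^ 2 * T ^ 2 - a ^ 2) := by
    have hTs : T / s ^ 2 = μ := by rw [hT]; field_simp
    rw [hY0, hx0, div_pow, div_pow, ← hpt, ← hTs]
    field_simp
    ring
  obtain ⟨r, hr⟩ := conic_param hconic hpt' hM hN
  refine ⟨r, fun E iE uE vE wE μE sE rE => ?_⟩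
  have aE : a ∈ E := ha ▸ add_mem uE (mul_mem iE vE)
  have bE : b ∈ E := hb' ▸ sub_mem uE (mul_mem iE vE)
  have TE : T ∈ E := hT ▸ mul_mem μE (pow_mem sE 2)
  have p0E : p0 ∈ E := by
    rw [hp0]
    apply_rules [add_mem, sub_mem, mul_mem, div_mem, pow_mem, one_mem, ofNat_mem]
  have p2E : p2 ∈ E := by
    rw [hp2]
    apply_rules [add_mem, sub_mem, mul_mem, div_mem, pow_mem, one_mem, ofNat_mem]
  have y2E : y2 ∈ E := by
    rw [hy2]
    apply_rules [add_mem, sub_mem, mul_mem, div_mem, pow_mem, one_mem, ofNat_mem]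
  have x0E : x0 ∈ E := by
    rw [hx0]
    apply_rules [add_mem, sub_mem, mul_mem, div_mem, pow_mem, one_mem, ofNat_mem]
  have Y0E : Y0 ∈ E := by
    rw [hY0]
    apply_rules [add_mem, sub_mem, mul_mem, div_mem, pow_mem, one_mem, ofNat_mem]
  have hxY : x ∈ E ∧ Y ∈ E := by
    rcases hr with ⟨hx, hY⟩ | ⟨hx, hY | hY⟩
    · have xE : x ∈ E := by
        rw [hx]
        apply_rules [add_mem, sub_mem, mul_mem, div_mem, pow_mem, one_mem, ofNat_mem]
      exact ⟨xE, hY ▸ add_mem Y0E (mul_mem rE (sub_mem xE x0E))⟩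
    · exact ⟨hx ▸ x0E, hY ▸ Y0E⟩
    · exact ⟨hx ▸ x0E, hY ▸ neg_mem Y0E⟩
  obtain ⟨xE, YE⟩ := hxY
  have yE : y ∈ E := by
    have : y = (w * Y - 2 * i * u * v * μ * w * s) / (a ^ 2 - b ^ 2 * T) := by
      rw [hY']; field_simp; ring
    rw [this]
    apply_rules [add_mem, sub_mem, mul_mem, div_mem, pow_mem, one_mem, ofNat_mem]
  refine ⟨xE, yE, ?_⟩
  have : t = (2 * i * u * v * μ * (w * y + s * (y ^ 2 + w ^ 2 * μ / 2))
      - μ * s * (w ^ 2 * x ^ 2 + (u ^ 2 - v ^ 2) * y ^ 2)) / w := by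
    rw [← h1]; field_simp; ring
  rw [this]
  apply_rules [add_mem, sub_mem, mul_mem, div_mem, pow_mem, one_mem, ofNat_mem]

/-- With `A = w²μ`, `B = (u²−v²)μ` and `C = u²v²w²μ³`, the function field of the del Pezzo
surface `A x⁴ + 2B x²y² + A y⁴ + C z⁴ = t²` of degree 2 is `k`-rational. -/
theorem delPezzo2_quartic_rational
    (k : Type*) [Field k] [CharZero k]
    (i : k) (hi : i ^ 2 = -1)
    (μ : k) (hμ : ¬ IsSquare μ)
    (u v w : k) (hu : u ≠ 0) (hv : v ≠ 0) (hw : w ≠ 0)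
    (huvw : w ^ 2 = u ^ 2 + v ^ 2)
    (A B C : k)
    (hA : A = w ^ 2 * μ) (hB : B = (u ^ 2 - v ^ 2) * μ)
    (hC : C = u ^ 2 * v ^ 2 * w ^ 2 * μ ^ 3)
    -- K is the function field of the surface: K = k(x, y, t) with t² = f_C(x, y)
    (K : Type*) [Field K] [Algebra k K]
    (x y t : K)
    (hind : AlgebraicIndependent k ![x, y])
    (hrel : t ^ 2 = algebraMap k K A * x ^ 4 + 2 * algebraMap k K B * x ^ 2 * y ^ 2
        + algebraMap k K A * y ^ 4 + algebraMap k K C)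
    (hgen : IntermediateField.adjoin k {x, y, t} = ⊤)
    (ht : t ∉ IntermediateField.adjoin k ({x, y} : Set K)) :
    IsKRational k K := by
  have hK : CharZero K := charZero_of_injective_algebraMap (algebraMap k K).injective
  have hμ0 : μ ≠ 0 := by rintro rfl; exact hμ ⟨0, by simp⟩
  have hi0 : i ≠ 0 := by rintro rfl; norm_num at hi
  have hvw0 : v - w ≠ 0 := by
    intro h
    apply pow_ne_zero 2 hu
    linear_combination -(v + w) * h - huvw
  have hab : (u + i * v) * (u - i * v) = w ^ 2 := by linear_combination -v ^ 2 * hi - huvw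
  have hb0 : u - i * v ≠ 0 := by
    intro h; rw [h, mul_zero] at hab; exact pow_ne_zero 2 hw hab.symm
  have hy0 : y ≠ 0 := by simpa using hind.ne_zero 1
  -- the polynomial giving `β / μ` has a nonzero constant term
  have hq0 : w ^ 2 • x ^ 2 + (u ^ 2 - v ^ 2 - 2 * i * u * v) • y ^ 2
      - algebraMap k K (i * u * v * w ^ 2 * μ) ≠ 0 := by
    intro h
    have hp : (w ^ 2 • MvPolynomial.X 0 ^ 2 + (u ^ 2 - v ^ 2 - 2 * i * u * v) • MvPolynomial.X 1 ^ 2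
      - MvPolynomial.C (i * u * v * w ^ 2 * μ) : MvPolynomial (Fin 2) k) = 0 := by
      apply hind
      simpa using h
    have := congrArg (MvPolynomial.eval ![0, 0]) hp
    simp [hi0, hu, hv, hw, hμ0] at this
  obtain ⟨F, hF⟩ : ∃ F, F = IntermediateField.adjoin k ({x, y} : Set K) := ⟨_, rfl⟩
  rw [← hF] at ht
  have hxF : x ∈ F := hF ▸ IntermediateField.subset_adjoin _ _ (by simp)
  have hyF : y ∈ F := hF ▸ IntermediateField.subset_adjoin _ _ (by simp)
  have ht2 : t ^ 2 ∈ F := by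
    rw [hrel]
    apply_rules [add_mem, mul_mem, pow_mem, F.algebraMap_mem, ofNat_mem]
  rw [hA, hB, hC] at hrel
  have hsq (s : K) : (∀ d : k, s ^ 2 ≠ algebraMap k K d) →
      ∀ d : k, algebraMap k K μ * s ^ 2 ≠ algebraMap k K d := by
    intro h d hd
    apply h (μ⁻¹ * d)
    rw [map_mul, ← hd, ← mul_assoc, ← map_mul, inv_mul_cancel₀ hμ0, map_one, one_mul]
  obtain ⟨β, hβ⟩ : ∃ β, β = algebraMap k K μ *
      (w ^ 2 • x ^ 2 + (u ^ 2 - v ^ 2 - 2 * i * u * v) • y ^ 2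
        - algebraMap k K (i * u * v * w ^ 2 * μ)) := ⟨_, rfl⟩
  obtain ⟨α, hα⟩ : ∃ α, α = algebraMap k K (2 * i * u * v * μ * w) * y := ⟨_, rfl⟩
  have hβ0 : β ≠ 0 := by
    rw [hβ]; exact mul_ne_zero (by simpa using hμ0) hq0
  have hα0 : α ≠ 0 := by
    rw [hα]; exact mul_ne_zero (by simp [hi0, hu, hv, hw, hμ0]) hy0
  have hβF : β ∈ F := by
    rw [hβ]; simp only [Algebra.smul_def]
    apply_rules [add_mem, sub_mem, mul_mem, pow_mem, F.algebraMap_mem, ofNat_mem]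
  have hαF : α ∈ F := by
    rw [hα]
    apply_rules [add_mem, sub_mem, mul_mem, pow_mem, F.algebraMap_mem, ofNat_mem]
  -- the parameter of the conic bundle
  obtain ⟨s, hs⟩ : ∃ s, s = (α - algebraMap k K w * t) / β := ⟨_, rfl⟩
  have hsβ : algebraMap k K w * t = α - s * β := by rw [hs]; field_simp; ring
  have hTne := hsq s (not_const F hαF hβF hα0 hβ0
    (by rw [mul_pow]; exact mul_mem (pow_mem (F.algebraMap_mem _) 2) ht2)
    (fun h => ht (by
      have := mul_mem (F.algebraMap_mem w⁻¹) h
      rwa [← mul_assoc, ← map_mul, inv_mul_cancel₀ hw, map_one, one_mul] at this)) hsβ)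
  have hs0 : s ≠ 0 := by
    rintro rfl; exact hTne 0 (by simp)
  have hT1 := hTne 1
  have hT2 := hTne ((u + i * v) ^ 2 / (u - i * v) ^ 2)
  have hT3 := hTne ((u + i * v) / (u - i * v))
  have hT4 := hTne (-((u + i * v) / (u - i * v)))
  have cmem (E : IntermediateField k K) (c : k) : algebraMap k K c ∈ E := E.algebraMap_mem c
  -- from here on all constants are read in `K`
  replace hi := congrArg (algebraMap k K) hi
  replace huvw := congrArg (algebraMap k K) huvw
  have inj {c : k} (hc : c ≠ 0) : algebraMap k K c ≠ 0 := (map_ne_zero _).2 hc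
  replace hvw0 := inj hvw0
  replace hb0 := inj hb0
  replace hw := inj hw
  replace hu := inj hu
  replace hv := inj hv
  replace hi0 := inj hi0
  replace hμ0 := inj hμ0
  simp only [Algebra.smul_def, map_mul, map_add, map_sub, map_pow, map_neg, map_one, map_div₀,
    map_ofNat] at hi huvw hvw0 hb0 hT1 hT2 hT3 hT4 hα hβ hrel
  obtain ⟨r, hr⟩ := exists_parameter k hi huvw hw hvw0 hμ0 hi0 hu hv hb0 hs0 hT1 hT2 hT3 hT4
    (by rw [hsβ, hα, hβ]; ring) (second_relation hi huvw hrel hβ0 hα hβ hsβ)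
  refine rational_of_adjoin_pair hind (s := s) (r := r) (top_le_iff.1 (hgen ▸ ?_))
  obtain ⟨hx, hy, ht⟩ := hr (IntermediateField.adjoin k {s, r}) (cmem _ i) (cmem _ u)
    (cmem _ v) (cmem _ w) (cmem _ μ)
    (IntermediateField.subset_adjoin _ _ (by simp)) (IntermediateField.subset_adjoin _ _ (by simp))
  rw [IntermediateField.adjoin_le_iff]
  rintro z (rfl | rfl | rfl) <;> assumption
end

section
/- With C = u²v²w²μ³, let ν be the k-automorphism of K_C of order 2 determined by ν(X) = −X, ν(Y) = −Y, ν(T) = T (the involution of type 1 in the paper's Table 2). Then the fixed field of ⟨ν⟩ acting on K_C is not k-rational, although K_C itself is k-rational. -/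
/-! ### Norms from a constant quadratic extension of a polynomial ring -/

/-- If a prime `p` is inert for the form `a² - μ b²` (it divides a value only when it divides both
arguments), then no value of the form contains `p` to an odd power. -/
theorem inert_no_odd {R : Type*} [CommRing R] [IsDomain R] [WfDvdMonoid R] {μ p : R}
    (hp : Prime p) (hin : ∀ a b : R, p ∣ a ^ 2 - μ * b ^ 2 → p ∣ a ∧ p ∣ b)
    {m d a b : R} (hm : ¬ p ∣ m) (hd : d ≠ 0) (h : p * m * d ^ 2 = a ^ 2 - μ * b ^ 2) :
    False := by
  obtain ⟨n, d', hd', rfl⟩ := WfDvdMonoid.max_power_factor hd hp.irreducible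
  induction n generalizing a b with
  | zero =>
    obtain ⟨⟨a, rfl⟩, ⟨b, rfl⟩⟩ := hin a b ⟨_, by rw [← h, mul_assoc]⟩
    have h2 : m * d' ^ 2 = p * (a ^ 2 - μ * b ^ 2) := by
      apply mul_left_cancel₀ hp.ne_zero
      linear_combination h
    rcases hp.dvd_or_dvd ⟨_, h2⟩ with h3 | h3
    · exact hm h3
    · exact hd' (hp.dvd_of_dvd_pow h3)
  | succ n ih =>
    obtain ⟨⟨a, rfl⟩, ⟨b, rfl⟩⟩ := hin a b ⟨_, by rw [← h, mul_assoc]⟩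
    refine ih (a := a) (b := b) (right_ne_zero_of_mul (a := p) ?_) ?_
    · rwa [← mul_assoc, ← pow_succ']
    · apply mul_left_cancel₀ (pow_ne_zero 2 hp.ne_zero)
      linear_combination h

section

open MvPolynomial

variable {k L σ : Type*} [Field k] [Field L] [Algebra k L] {μ : k} {ρ : L}

/-- If `L = k + ρ k`, then `L[X] = k[X] + ρ k[X]`. -/
theorem exists_map_add_map (hspan : ∀ l : L, ∃ a b : k, l = algebraMap k L a + ρ * algebraMap k L b)
    (f : MvPolynomial σ L) :
    ∃ a b : MvPolynomial σ k, f = map (algebraMap k L) a + C ρ * map (algebraMap k L) b := by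
  induction f using MvPolynomial.induction_on with
  | C l =>
    obtain ⟨a, b, rfl⟩ := hspan l
    exact ⟨C a, C b, by simp⟩
  | add p q hp hq =>
    obtain ⟨a, b, rfl⟩ := hp
    obtain ⟨c, d, rfl⟩ := hq
    exact ⟨a + c, b + d, by simp; ring⟩
  | mul_X p n hp =>
    obtain ⟨a, b, rfl⟩ := hp
    exact ⟨a * X n, b * X n, by simp; ring⟩

theorem map_add_map_inj
    (hind : ∀ a b c d : k, algebraMap k L a + ρ * algebraMap k L b
      = algebraMap k L c + ρ * algebraMap k L d → a = c ∧ b = d)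
    {a b c d : MvPolynomial σ k}
    (h : map (algebraMap k L) a + C ρ * map (algebraMap k L) b
      = map (algebraMap k L) c + C ρ * map (algebraMap k L) d) : a = c ∧ b = d := by
  have key : ∀ m, a.coeff m = c.coeff m ∧ b.coeff m = d.coeff m := by
    intro m
    apply hind
    simpa [coeff_C_mul, coeff_map] using congrArg (coeff m) h
  exact ⟨MvPolynomial.ext _ _ fun m => (key m).1, MvPolynomial.ext _ _ fun m => (key m).2⟩

/-- A prime of `k[X]` either splits in `L[X]`, `L = k(√μ)`, and is then a norm up to a nonzero
constant, or stays prime there and is then inert for the norm form `a² - μ b²`. -/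
theorem prime_norm_or_inert [Finite σ] (hρ : ρ ^ 2 = algebraMap k L μ)
    (hspan : ∀ l : L, ∃ a b : k, l = algebraMap k L a + ρ * algebraMap k L b)
    (hind : ∀ a b c d : k, algebraMap k L a + ρ * algebraMap k L b
      = algebraMap k L c + ρ * algebraMap k L d → a = c ∧ b = d)
    {p : MvPolynomial σ k} (hp : Prime p) :
    (∃ c : k, c ≠ 0 ∧ ∃ a b, C c * p = a ^ 2 - C μ * b ^ 2) ∨
      (∀ a b, p ∣ a ^ 2 - C μ * b ^ 2 → p ∣ a ∧ p ∣ b) := by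
  by_contra! hcon
  obtain ⟨hno, a, b, hab, hnd⟩ := hcon
  have hC : (C ρ : MvPolynomial σ L) ^ 2 = map (algebraMap k L) (C μ) := by
    rw [← map_pow, hρ]; simp
  have hinj : Function.Injective (map (algebraMap k L) : MvPolynomial σ k → _) :=
    map_injective _ (algebraMap k L).injective
  set ι : MvPolynomial σ k →+* MvPolynomial σ L := map (algebraMap k L) with hι
  -- a divisibility over `L` of an element `a + ρ b` descends to `a` and `b`
  have hdvd : ∀ a b : MvPolynomial σ k, ι p ∣ ι a + C ρ * ι b → p ∣ a ∧ p ∣ b := by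
    rintro a b ⟨q, hq⟩
    obtain ⟨c, d, rfl⟩ := exists_map_add_map hspan q
    have : a = p * c ∧ b = p * d := by
      apply map_add_map_inj hind
      rw [← hι, hq, map_mul, map_mul]; ring
    exact ⟨⟨c, this.1⟩, ⟨d, this.2⟩⟩
  have hnp : ¬ Prime (ι p) := by
    intro hprime
    have h1 : ι p ∣ (ι a + C ρ * ι b) * (ι a + C ρ * ι (-b)) := by
      have h2 := map_dvd ι hab
      convert h2 using 1
      simp only [map_sub, map_mul, map_pow, map_neg, ← hC]; ring
    rcases hprime.dvd_or_dvd h1 with h | h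
    · exact hnd (hdvd _ _ h).1 (hdvd _ _ h).2
    · exact hnd (hdvd _ _ h).1 ((dvd_neg).1 (hdvd _ _ h).2)
  have hp0 : ι p ≠ 0 := fun h => hp.ne_zero (hinj (by rw [h, map_zero]))
  have hpu : ¬ IsUnit (ι p) := by
    rintro ⟨⟨_, q, hq, -⟩, rfl⟩
    have h1 : ι p ∣ ι 1 + C ρ * ι 0 := ⟨q, by simp [hq]⟩
    exact hp.not_isUnit (isUnit_of_dvd_one (hdvd _ _ h1).1)
  rw [← UniqueFactorizationMonoid.irreducible_iff_prime] at hnp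
  rw [irreducible_iff] at hnp
  push Not at hnp
  obtain ⟨π, m, hπm, hπ, hm⟩ := hnp hpu
  obtain ⟨a1, b1, rfl⟩ := exists_map_add_map hspan π
  obtain ⟨a2, b2, rfl⟩ := exists_map_add_map hspan m
  have hunit : ∀ a b : MvPolynomial σ k, IsUnit (a ^ 2 - C μ * b ^ 2) →
      IsUnit (ι a + C ρ * ι b) := by
    intro a b h
    have h1 := h.map ι
    have h2 : ι (a ^ 2 - C μ * b ^ 2) = (ι a + C ρ * ι b) * (ι a - C ρ * ι b) := by
      simp only [map_sub, map_mul, map_pow, ← hC]; ring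
    rw [h2] at h1
    exact isUnit_of_mul_isUnit_left h1
  have h3 : p = a1 * a2 + C μ * (b1 * b2) ∧ 0 = a1 * b2 + a2 * b1 := by
    apply map_add_map_inj hind
    rw [← hι]
    simp only [map_add, map_mul, map_zero, mul_zero, add_zero]
    rw [hπm]
    rw [← hC]; ring
  have hnorm : (a1 ^ 2 - C μ * b1 ^ 2) * (a2 ^ 2 - C μ * b2 ^ 2) = p ^ 2 := by
    rw [h3.1]
    linear_combination (C μ * (a1 * b2 + a2 * b1)) * h3.2
  obtain ⟨j, hj, hass⟩ := (dvd_prime_pow hp 2).1 ⟨_, hnorm.symm⟩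
  interval_cases j
  · exact hπ (hunit _ _ (by rw [pow_zero] at hass; exact hass.symm.isUnit isUnit_one))
  · obtain ⟨w, hw⟩ := hass.symm
    obtain ⟨c, hc, hcw⟩ := (MvPolynomial.isUnit_iff_eq_C_of_isReduced (P := (w : MvPolynomial σ k))).1 w.isUnit
    refine hno c hc.ne_zero a1 b1 ?_
    rw [← hw, hcw]; ring
  · obtain ⟨w, hw⟩ := hass
    apply hm (hunit _ _ ?_)
    rw [← hw, ] at hnorm
    have h0 : a1 ^ 2 - C μ * b1 ^ 2 ≠ 0 := by
      intro h0
      rw [h0, zero_mul] at hw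
      exact pow_ne_zero 2 hp.ne_zero hw.symm
    rw [mul_left_cancel₀ h0 hnorm]
    exact w.isUnit

/-- If `P P' d²` is a norm from `L[X]` with `P`, `P'` coprime, then `P` itself is a norm up to a
nonzero constant: inert primes occur in `P` to even powers, all others are norms. -/
theorem coprime_factor_norm [Finite σ] (hρ : ρ ^ 2 = algebraMap k L μ)
    (hspan : ∀ l : L, ∃ a b : k, l = algebraMap k L a + ρ * algebraMap k L b)
    (hind : ∀ a b c d : k, algebraMap k L a + ρ * algebraMap k L b
      = algebraMap k L c + ρ * algebraMap k L d → a = c ∧ b = d)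
    (P : MvPolynomial σ k) : ∀ P' d a b : MvPolynomial σ k, P ≠ 0 → P' ≠ 0 → d ≠ 0 →
      IsRelPrime P P' → P * P' * d ^ 2 = a ^ 2 - C μ * b ^ 2 →
      ∃ c : k, c ≠ 0 ∧ ∃ a b, C c * P = a ^ 2 - C μ * b ^ 2 := by
  induction P using UniqueFactorizationMonoid.induction_on_coprime with
  | h0 => exact fun _ _ _ _ h => absurd rfl h
  | @h1 x hx =>
    intro _ _ _ _ _ _ _ _ _
    obtain ⟨c, hc, rfl⟩ := (MvPolynomial.isUnit_iff_eq_C_of_isReduced).1 hx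
    exact ⟨c⁻¹, inv_ne_zero hc.ne_zero, 1, 0, by rw [← C_mul, inv_mul_cancel₀ hc.ne_zero]; simp⟩
  | @hpr p n hp =>
    intro P' d a b hP hP' hd hrel h
    rcases prime_norm_or_inert hρ hspan hind hp with ⟨c, hc, a1, b1, h1⟩ | hin
    · have : ∀ n : ℕ, ∃ a b, C (c ^ n) * p ^ n = a ^ 2 - C μ * b ^ 2 := by
        intro n
        induction n with
        | zero => exact ⟨1, 0, by simp⟩
        | succ n ih =>
          obtain ⟨a2, b2, h2⟩ := ih
          refine ⟨a1 * a2 + C μ * (b1 * b2), a1 * b2 + a2 * b1, ?_⟩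
          rw [pow_succ, C_mul, pow_succ]
          linear_combination C c * p * h2 + (a2 ^ 2 - C μ * b2 ^ 2) * h1
      exact ⟨c ^ n, pow_ne_zero _ hc, this n⟩
    · rcases Nat.even_or_odd' n with ⟨j, rfl | rfl⟩
      · exact ⟨1, one_ne_zero, p ^ j, 0, by simp [pow_mul']⟩
      · exfalso
        refine inert_no_odd hp hin (m := P') (d := p ^ j * d) (a := a) (b := b) ?_
          (mul_ne_zero (pow_ne_zero _ hp.ne_zero) hd) (by rw [← h]; ring)
        intro hdvd
        exact hp.not_isUnit (hrel (dvd_pow_self p (by omega)) hdvd)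
  | @hcp x y hxy hx hy =>
    intro P' d a b hP hP' hd hrel h
    obtain ⟨c1, hc1, a1, b1, h1⟩ := hx (y * P') d a b (left_ne_zero_of_mul hP)
      (mul_ne_zero (right_ne_zero_of_mul hP) hP') hd
      (IsRelPrime.mul_right hxy (IsRelPrime.of_mul_left_left hrel)) (by rw [← h]; ring)
    obtain ⟨c2, hc2, a2, b2, h2⟩ := hy (x * P') d a b (right_ne_zero_of_mul hP)
      (mul_ne_zero (left_ne_zero_of_mul hP) hP') hd
      (IsRelPrime.mul_right hxy.symm (IsRelPrime.of_mul_left_right hrel)) (by rw [← h]; ring)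
    refine ⟨c1 * c2, mul_ne_zero hc1 hc2, a1 * a2 + C μ * (b1 * b2), a1 * b2 + a2 * b1, ?_⟩
    rw [C_mul]
    linear_combination C c2 * y * h1 + (a1 ^ 2 - C μ * b1 ^ 2) * h2

end

section

open MvPolynomial

/-- The consequence of rationality: over a purely transcendental extension `G` of `k`, if
`∏ⱼ (Z - eⱼ)` is a norm from `G(√μ)`, then so is `c (Z - e₁)(Z - e₂)` for some constant `c ≠ 0`.
Writing `Z = a / b` in lowest terms, the first two factors `a - eⱼ b` are coprime to
the last two. The denominator `b` occurs to an even power, so it does not matter. -/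
theorem half_product_norm {k σ G : Type*} [Field k] [Finite σ] [Field G] [Algebra k G]
    [Algebra (MvPolynomial σ k) G] [IsFractionRing (MvPolynomial σ k) G]
    [IsScalarTower k (MvPolynomial σ k) G]
    {μ : k} (hμ : ¬ IsSquare μ) {e₁ e₂ e₃ e₄ : k} (h13 : e₁ ≠ e₃) (h14 : e₁ ≠ e₄) (h23 : e₂ ≠ e₃)
    (h24 : e₂ ≠ e₄) {Z α β : G}
    (hne : (Z - algebraMap k G e₁) * (Z - algebraMap k G e₂)
      * ((Z - algebraMap k G e₃) * (Z - algebraMap k G e₄)) ≠ 0)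
    (h : (Z - algebraMap k G e₁) * (Z - algebraMap k G e₂)
      * ((Z - algebraMap k G e₃) * (Z - algebraMap k G e₄)) = α ^ 2 - algebraMap k G μ * β ^ 2) :
    ∃ c : k, c ≠ 0 ∧ ∃ α' β' : G,
      algebraMap k G c * ((Z - algebraMap k G e₁) * (Z - algebraMap k G e₂))
        = α' ^ 2 - algebraMap k G μ * β' ^ 2 := by
  classical
  have hfact : Fact (∀ r : k, r ^ 2 ≠ μ + 0 * r) := ⟨fun r hr => hμ ⟨r, by rw [← sq, hr]; ring⟩⟩
  have hinj : Function.Injective (algebraMap (MvPolynomial σ k) G) := IsFractionRing.injective _ _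
  have hC : ∀ e : k, algebraMap k G e = algebraMap (MvPolynomial σ k) G (C e) := by
    intro e
    rw [IsScalarTower.algebraMap_apply k (MvPolynomial σ k) G, MvPolynomial.algebraMap_eq]
  obtain ⟨a, b, hab, hZ⟩ := IsFractionRing.exists_reduced_fraction (A := MvPolynomial σ k) Z
  obtain ⟨b, hb⟩ := b
  have hb0 : b ≠ 0 := nonZeroDivisors.ne_zero hb
  simp only at hab
  replace hZ : algebraMap (MvPolynomial σ k) G a = Z * algebraMap _ G b := by
    rw [← hZ, IsFractionRing.mk'_eq_div, div_mul_cancel₀]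
    exact fun h0 => hb0 (hinj (by rw [h0, map_zero]))
  have hb0' : algebraMap (MvPolynomial σ k) G b ≠ 0 := fun h0 => hb0 (hinj (by rw [h0, map_zero]))
  obtain ⟨⟨d, hd⟩, hdint⟩ := IsLocalization.exist_integer_multiples_of_finset
    (nonZeroDivisors (MvPolynomial σ k)) ({α, β} : Finset G)
  obtain ⟨a', ha'⟩ := hdint α (by simp)
  obtain ⟨b', hb'⟩ := hdint β (by simp)
  have hd0 : d ≠ 0 := nonZeroDivisors.ne_zero hd
  simp only [Algebra.smul_def] at ha' hb'
  have hfac : ∀ e : k, algebraMap (MvPolynomial σ k) G (a - C e * b)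
      = (Z - algebraMap k G e) * algebraMap (MvPolynomial σ k) G b := by
    intro e
    rw [map_sub, map_mul, hZ, hC]; ring
  have hrel : ∀ e e' : k, e ≠ e' → IsRelPrime (a - C e * b) (a - C e' * b) := by
    intro e e' hee q hq1 hq2
    have h1 : q ∣ C (e' - e) * b := by
      have := dvd_sub hq1 hq2
      convert this using 1
      rw [C_sub]; ring
    have h2 : q ∣ b := by
      have h3 := h1.mul_left (C (e' - e)⁻¹)
      rwa [← mul_assoc, ← C_mul, inv_mul_cancel₀ (sub_ne_zero.2 hee.symm), C_1, one_mul] at h3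
    refine hab ?_ h2
    have := dvd_add hq1 (h2.mul_left (C e))
    rwa [sub_add_cancel] at this
  have hprod : algebraMap (MvPolynomial σ k) G
      ((a - C e₁ * b) * (a - C e₂ * b) * ((a - C e₃ * b) * (a - C e₄ * b))) ≠ 0 := by
    simp only [map_mul, hfac]
    intro h0
    apply hne
    have := pow_ne_zero 4 hb0'
    apply (mul_eq_zero.1 (_ : _ * (algebraMap (MvPolynomial σ k) G b) ^ 4 = 0)).resolve_right this
    linear_combination h0
  have hprod' : (a - C e₁ * b) * (a - C e₂ * b) * ((a - C e₃ * b) * (a - C e₄ * b)) ≠ 0 := by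
    intro h0; rw [h0, map_zero] at hprod; exact hprod rfl
  obtain ⟨c, hc, α', β', hαβ⟩ := coprime_factor_norm (σ := σ)
    (L := QuadraticAlgebra k μ 0) (μ := μ) (ρ := QuadraticAlgebra.omega)
    (by rw [sq, QuadraticAlgebra.omega_mul_omega_eq_mk]; rfl)
    (fun l => ⟨l.re, l.im, by ext <;> simp⟩)
    (fun a b c d h => by
      have h1 := congrArg QuadraticAlgebra.re h
      have h2 := congrArg QuadraticAlgebra.im h
      simp at h1 h2
      exact ⟨h1, h2⟩)
    ((a - C e₁ * b) * (a - C e₂ * b)) ((a - C e₃ * b) * (a - C e₄ * b)) d (b ^ 2 * a') (b ^ 2 * b')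
    (left_ne_zero_of_mul hprod') (right_ne_zero_of_mul hprod') hd0
    (IsRelPrime.mul_left (IsRelPrime.mul_right (hrel _ _ h13) (hrel _ _ h14))
      (IsRelPrime.mul_right (hrel _ _ h23) (hrel _ _ h24)))
    (by
      apply hinj
      rw [map_sub]
      simp only [map_mul, map_pow, ha', hb', hfac, ← hC]
      linear_combination (algebraMap (MvPolynomial σ k) G b) ^ 4 * (algebraMap (MvPolynomial σ k) G d) ^ 2 * h)
  refine ⟨c, hc, algebraMap _ G α' / algebraMap _ G b, algebraMap _ G β' / algebraMap _ G b, ?_⟩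
  have h2 := congrArg (algebraMap (MvPolynomial σ k) G) hαβ
  simp only [map_mul, hfac, map_pow, map_sub _ (_ ^ 2) _, ← hC] at h2
  field_simp
  linear_combination h2

theorem not_isSquare_fractionField {k σ G : Type*} [Field k] [Field G] [Algebra k G]
    [Algebra (MvPolynomial σ k) G] [IsFractionRing (MvPolynomial σ k) G]
    [IsScalarTower k (MvPolynomial σ k) G] {μ : k} (hμ : ¬ IsSquare μ) :
    ¬ IsSquare (algebraMap k G μ) := by
  rintro ⟨r, hr⟩
  rw [IsScalarTower.algebraMap_apply k (MvPolynomial σ k) G] at hr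
  obtain ⟨s, rfl⟩ := IsIntegrallyClosed.exists_algebraMap_eq_of_isIntegral_pow
    (R := MvPolynomial σ k) (K := G) (x := r) (n := 2) (by norm_num)
    (by rw [sq, ← hr]; exact isIntegral_algebraMap)
  rw [← map_mul] at hr
  have h1 := congrArg constantCoeff (IsFractionRing.injective (MvPolynomial σ k) G hr)
  exact hμ ⟨constantCoeff s, by simpa using h1⟩

end

/-! ### Subfields and transcendence degree -/

section

variable {k K : Type*} [Field k] [Field K] [Algebra k K]

/-- The subfield `A` is the relative algebraic closure of `k(c)` in `K`, which cannot contain two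
algebraically independent elements. All the transcendence and nonvanishing claims below are reduced to this fact. -/
theorem exists_algClosed_trdeg_one {x y : K} (hind : AlgebraicIndependent k ![x, y]) (c : K) :
    ∃ A : IntermediateField k K, c ∈ A ∧ (∀ a : K, IsAlgebraic A a → a ∈ A) ∧
      ¬ (x ∈ A ∧ y ∈ A) := by
  set Mt := AlgebraicIndependent.matroid k K with hMt
  obtain ⟨S, hS, hSalg⟩ := AlgebraicIndependent.matroid_isFlat_iff.1 (Mt.isFlat_closure {c})
  have hmem : ∀ a : K, a ∈ S ↔ a ∈ Mt.closure {c} := fun a => by rw [← hS]; rfl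
  let A : IntermediateField k K :=
    { S with
      inv_mem' := by
        intro a ha
        exact (hmem _).2 (hSalg _ (IsAlgebraic.inv (isAlgebraic_algebraMap (⟨a, ha⟩ : S)))) }
  refine ⟨A, ?_, fun a ha => ?_, ?_⟩
  · exact (hmem c).2 (Mt.mem_closure_of_mem' rfl)
  · exact (hmem a).2 (hSalg a ha)
  · rintro ⟨hx, hy⟩
    have hxy : x ≠ y := fun h => by
      have := hind.injective.ne (show (0 : Fin 2) ≠ 1 by decide)
      exact this (by simpa using h)
    have hI : Mt.Indep {x, y} := by
      have := hind.to_subtype_range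
      rw [AlgebraicIndependent.matroid_indep_iff]
      rwa [Matrix.range_cons, Matrix.range_cons, Matrix.range_empty, Set.union_empty,
        Set.singleton_union] at this
    have h1 := hI.encard_le_eRk_of_subset (X := Mt.closure {c}) (by
      rintro a (rfl | rfl)
      · exact (hmem _).1 hx
      · exact (hmem _).1 hy)
    rw [Mt.eRk_closure_eq, Set.encard_pair hxy] at h1
    have h2 := h1.trans (Mt.eRk_le_encard _)
    rw [Set.encard_singleton] at h2
    exact absurd h2 (by norm_num)

theorem mem_of_sq_mem {A : IntermediateField k K} (hA : ∀ a : K, IsAlgebraic A a → a ∈ A) {a : K}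
    (h : a ^ 2 ∈ A) : a ∈ A :=
  hA a (IsAlgebraic.of_pow (n := 2) (by norm_num) (isAlgebraic_algebraMap (⟨a ^ 2, h⟩ : A)))

/-- Two generators of a field of transcendence degree at least two are automatically algebraically
independent. -/
theorem isKRational_of_adjoin_pair {x y : K} (hind : AlgebraicIndependent k ![x, y]) {a b : K}
    (hgen : IntermediateField.adjoin k {a, b} = ⊤) : IsKRational k K := by
  have hr : Set.range ![a, b] = {a, b} := by
    rw [Matrix.range_cons, Matrix.range_cons, Matrix.range_empty, Set.union_empty,
        Set.singleton_union]
  have halg : Algebra.IsAlgebraic (Algebra.adjoin k (Set.range ![a, b])) K := by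
    rw [hr]
    refine ⟨fun z => ?_⟩
    obtain ⟨r, hr, s, hs, rfl⟩ := IntermediateField.mem_adjoin_iff_div.1
      (show z ∈ IntermediateField.adjoin k {a, b} by rw [hgen]; trivial)
    rw [div_eq_mul_inv]
    exact (isAlgebraic_algebraMap (⟨r, hr⟩ : Algebra.adjoin k {a, b})).mul
      (isAlgebraic_algebraMap (⟨s, hs⟩ : Algebra.adjoin k {a, b})).inv
  have htb := Algebra.IsAlgebraic.isTranscendenceBasis_of_lift_le_trdeg_of_finite k ![a, b]
    hind.lift_cardinalMk_le_trdeg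
  have hinj : Function.Injective (MvPolynomial.aeval (R := k) ![a, b]) := htb.1
  let f : FractionRing (MvPolynomial (Fin 2) k) →ₐ[k] K := IsFractionRing.liftAlgHom hinj
  have hf : ∀ p, f (algebraMap _ _ p) = MvPolynomial.aeval (R := k) ![a, b] p := fun p =>
    IsFractionRing.lift_algebraMap hinj p
  refine ⟨(AlgEquiv.ofBijective f ⟨f.toRingHom.injective, ?_⟩).symm⟩
  rw [← AlgHom.fieldRange_eq_top]
  rw [eq_top_iff, ← hgen, IntermediateField.adjoin_le_iff]
  have h0 : f (algebraMap (MvPolynomial (Fin 2) k) _ (MvPolynomial.X 0)) = a := by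
    rw [hf, MvPolynomial.aeval_X]; rfl
  have h1 : f (algebraMap (MvPolynomial (Fin 2) k) _ (MvPolynomial.X 1)) = b := by
    rw [hf, MvPolynomial.aeval_X]; rfl
  rintro c (hc | hc)
  · exact hc ▸ ⟨_, h0⟩
  · exact hc ▸ ⟨_, h1⟩

/-- The subfield `E(ρ)` of `K`, for `ρ² ∈ E`, given explicitly as `E + E ρ`. It is not assumed
that `ρ ∉ E`. -/
def quadExt (E : IntermediateField k K) (ρ : K) (hρ : ρ ^ 2 ∈ E) : IntermediateField k K where
  carrier := {a | ∃ p ∈ E, ∃ q ∈ E, a = p + q * ρ}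
  mul_mem' := by
    rintro _ _ ⟨p, hp, q, hq, rfl⟩ ⟨p', hp', q', hq', rfl⟩
    exact ⟨p * p' + q * q' * ρ ^ 2, add_mem (mul_mem hp hp') (mul_mem (mul_mem hq hq') hρ),
      p * q' + q * p', add_mem (mul_mem hp hq') (mul_mem hq hp'), by ring⟩
  add_mem' := by
    rintro _ _ ⟨p, hp, q, hq, rfl⟩ ⟨p', hp', q', hq', rfl⟩
    exact ⟨p + p', add_mem hp hp', q + q', add_mem hq hq', by ring⟩
  algebraMap_mem' r := ⟨_, E.algebraMap_mem r, 0, zero_mem _, by ring⟩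
  inv_mem' := by
    rintro _ ⟨p, hp, q, hq, rfl⟩
    by_cases h : p - q * ρ = 0
    · have : p + q * ρ = p + p := by linear_combination -h
      rw [this]
      exact ⟨_, inv_mem (add_mem hp hp), 0, zero_mem _, by ring⟩
    by_cases h' : p + q * ρ = 0
    · rw [h']
      exact ⟨0, zero_mem _, 0, zero_mem _, by simp⟩
    · have hN : p ^ 2 - q ^ 2 * ρ ^ 2 ∈ E := sub_mem (pow_mem hp 2) (mul_mem (pow_mem hq 2) hρ)
      have hN0 : p ^ 2 - q ^ 2 * ρ ^ 2 ≠ 0 := by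
        have := mul_ne_zero h h'
        intro h0
        apply this
        linear_combination h0
      refine ⟨p * (p ^ 2 - q ^ 2 * ρ ^ 2)⁻¹, mul_mem hp (inv_mem hN),
        -q * (p ^ 2 - q ^ 2 * ρ ^ 2)⁻¹, mul_mem (neg_mem hq) (inv_mem hN), ?_⟩
      field_simp
      ring

theorem mem_quadExt {E : IntermediateField k K} {ρ : K} {hρ : ρ ^ 2 ∈ E} {a : K} :
    a ∈ quadExt E ρ hρ ↔ ∃ p ∈ E, ∃ q ∈ E, a = p + q * ρ := Iff.rfl

end

/-! ### Norms from the function field of a conic -/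

section

open Polynomial

variable {M Ω : Type*} [Field M] [Field Ω] [Algebra M Ω] {σ : Ω →+* Ω} {τ : M →+* M} {η : Ω} {Q : M}

/-- When `η · σ η = Q` lies in `M`, the conjugate `σ (p(η))` is, up to a power of `η`, again a
polynomial in `η` over `M`, of the same degree as `p` because `p(0) ≠ 0`. -/
theorem exists_conj_poly (hτ : ∀ m, σ (algebraMap M Ω m) = algebraMap M Ω (τ m))
    (hη : η * σ η = algebraMap M Ω Q) {p : M[X]} (hp : p.coeff 0 ≠ 0) :
    ∃ q : M[X], q.natDegree = p.natDegree ∧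
      aeval η q = η ^ p.natDegree * σ (aeval η p) := by
  refine ⟨∑ j ∈ Finset.range (p.natDegree + 1),
    C (τ (p.coeff j) * Q ^ j) * X ^ (p.natDegree - j), ?_, ?_⟩
  · apply natDegree_eq_of_le_of_coeff_ne_zero
    · apply natDegree_sum_le_of_forall_le
      intro j _
      exact (natDegree_C_mul_X_pow_le _ _).trans (Nat.sub_le _ _)
    · rw [finsetSum_coeff, Finset.sum_eq_single 0]
      · simpa using hp
      · intro j hj hj0
        rw [coeff_C_mul_X_pow, if_neg]
        have := Finset.mem_range.1 hj
        omega
      · simp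
  · rw [aeval_eq_sum_range (p := p), map_sum, map_sum, Finset.mul_sum]
    refine Finset.sum_congr rfl fun j hj => ?_
    have hj' : j ≤ p.natDegree := Nat.lt_succ_iff.1 (Finset.mem_range.1 hj)
    simp only [Algebra.smul_def, map_mul, map_pow, hτ, aeval_C, aeval_X, ← hη, mul_pow]
    have : η ^ p.natDegree = η ^ j * η ^ (p.natDegree - j) := by
      rw [← pow_add, Nat.add_sub_cancel' hj']
    rw [this]; ring

/-- The main case of `norm_from_conic`: `h = P(η) / S(η)` with `P`, `S` coprime and prime to `X`.
Comparing degrees and using coprimality, `P` agrees with the conjugate of `S` up to a constant. -/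
theorem norm_coprime_case (hτ : ∀ m, σ (algebraMap M Ω m) = algebraMap M Ω (τ m))
    (hσ : ∀ a, σ (σ a) = a) (htr : Transcendental M η) (hη : η * σ η = algebraMap M Ω Q)
    {P S : M[X]} (hcop : IsCoprime P S) (hP : P.coeff 0 ≠ 0) (hS : S.coeff 0 ≠ 0)
    {h : Ω} (hh : h * aeval η S = aeval η P) {g : M} (hg0 : g ≠ 0)
    (hg : h * σ h = algebraMap M Ω g) : ∃ l : M, l ≠ 0 ∧ ∃ n : ℕ, g = (l * τ l) * Q ^ n := by
  have hinj : Function.Injective (aeval η : M[X] → Ω) := transcendental_iff_injective.1 htr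
  have hP0 : P ≠ 0 := by rintro rfl; simp at hP
  have hS0 : S ≠ 0 := by rintro rfl; simp at hS
  obtain ⟨P', hPd, hP'⟩ := exists_conj_poly hτ hη hP
  obtain ⟨S', hSd, hS'⟩ := exists_conj_poly hτ hη hS
  have hη0 : η ≠ 0 := by rintro rfl; exact htr isAlgebraic_zero
  have hSη : aeval η S ≠ 0 := fun h0 => hS0 (hinj (by rw [h0, map_zero]))
  have hPη : aeval η P ≠ 0 := fun h0 => hP0 (hinj (by rw [h0, map_zero]))
  have hS'0 : S' ≠ 0 := by
    rintro rfl
    rw [map_zero] at hS'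
    exact mul_ne_zero (pow_ne_zero _ hη0) ((map_ne_zero σ).2 hSη) hS'.symm
  have hP'0 : P' ≠ 0 := by
    rintro rfl
    rw [map_zero] at hP'
    exact mul_ne_zero (pow_ne_zero _ hη0) ((map_ne_zero σ).2 hPη) hP'.symm
  have hσh : σ h * σ (aeval η S) = σ (aeval η P) := by rw [← map_mul, hh]
  have key : C g * S * S' * X ^ P.natDegree = P * P' * X ^ S.natDegree := by
    apply hinj
    simp only [map_mul, map_pow, aeval_C, aeval_X, hS', hP', ← hg, ← hh]
    ring
  have hdeg : P.natDegree = S.natDegree := by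
    have h1 := congrArg natDegree key
    rw [natDegree_mul (mul_ne_zero (mul_ne_zero (C_ne_zero.2 hg0) hS0) hS'0) (by simp),
      natDegree_mul (mul_ne_zero (C_ne_zero.2 hg0) hS0) hS'0, natDegree_C_mul hg0,
      natDegree_mul (mul_ne_zero hP0 hP'0) (by simp), natDegree_mul hP0 hP'0, hPd, hSd] at h1
    simp only [natDegree_X_pow] at h1
    omega
  have hdvd : P ∣ S' := by
    rw [hdeg] at key
    have key' : C g * S * S' = P * P' := mul_right_cancel₀ (by simp) key
    have h1 : P ∣ S * (C g * S') := ⟨P', by rw [← key']; ring⟩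
    have h2 := hcop.dvd_of_dvd_mul_left h1
    exact ((isUnit_C.2 hg0.isUnit).dvd_mul_left).1 h2
  obtain ⟨q, hq⟩ := hdvd
  have hq0 : q ≠ 0 := by rintro rfl; exact hS'0 (by rw [hq, mul_zero])
  have hqd : q.natDegree = 0 := by
    have h1 := congrArg natDegree hq
    rw [natDegree_mul hP0 hq0, hSd, hdeg] at h1
    omega
  rw [eq_C_of_natDegree_eq_zero hqd] at hq hq0
  generalize q.coeff 0 = l at hq hq0
  have hl : l ≠ 0 := fun h0 => hq0 (by rw [h0, C_0])
  have h1 : η ^ S.natDegree * σ (aeval η S) = aeval η P * algebraMap M Ω l := by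
    rw [← hS', hq, map_mul, aeval_C]
  have h2 : σ η ^ S.natDegree * aeval η S = σ (aeval η P) * algebraMap M Ω (τ l) := by
    have := congrArg σ h1
    rwa [map_mul, map_mul, hσ, hτ, map_pow] at this
  refine ⟨l⁻¹, inv_ne_zero hl, S.natDegree, ?_⟩
  have hτl : τ l ≠ 0 := (map_ne_zero τ).2 hl
  have h3 : g * (l * τ l) = Q ^ S.natDegree := by
    apply (algebraMap M Ω).injective
    rw [map_mul, map_mul, map_pow, ← hη, ← hg, mul_pow]
    apply mul_right_cancel₀ (mul_ne_zero hSη ((map_ne_zero σ).2 hSη))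
    calc _ = (h * aeval η S) * (σ h * σ (aeval η S)) * (algebraMap M Ω l * algebraMap M Ω (τ l)) := by ring
      _ = (aeval η P * algebraMap M Ω l) * (σ (aeval η P) * algebraMap M Ω (τ l)) := by
        rw [hh, hσh]; ring
      _ = _ := by rw [← h1, ← h2]; ring
  rw [← h3, map_inv₀]
  field_simp

/-- Let `M(η)` be the function field of the conic `η · σ η = Q`, split over the quadratic extension
`M` of the fixed field of `τ`. An element `g` of `M` that is a norm `h · σ h` from `M(η)` is a norm
from `M` up to a power of `Q`; that is, only the class of the conic dies in its function field. -/
theorem norm_from_conic (hτ : ∀ m, σ (algebraMap M Ω m) = algebraMap M Ω (τ m))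
    (hσ : ∀ a, σ (σ a) = a) (htr : Transcendental M η) (hη : η * σ η = algebraMap M Ω Q)
    (hQ : Q ≠ 0) {h : Ω} (hmem : h ∈ IntermediateField.adjoin M {η}) {g : M} (hg0 : g ≠ 0)
    (hg : h * σ h = algebraMap M Ω g) : ∃ l : M, l ≠ 0 ∧ ∃ n : ℤ, g = (l * τ l) * Q ^ n := by
  classical
  have hinj : Function.Injective (aeval η : M[X] → Ω) := transcendental_iff_injective.1 htr
  have hη0 : η ≠ 0 := by rintro rfl; exact htr isAlgebraic_zero
  have hση0 : σ η ≠ 0 := (map_ne_zero σ).2 hη0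
  have hh0 : h ≠ 0 := by
    rintro rfl
    rw [zero_mul] at hg
    exact hg0 ((algebraMap M Ω).injective (by rw [← hg, map_zero]))
  obtain ⟨r, s, hrs⟩ := (IntermediateField.mem_adjoin_simple_iff M h).1 hmem
  have hs0 : s ≠ 0 := by rintro rfl; simp at hrs; exact hh0 hrs
  have hr0 : r ≠ 0 := by rintro rfl; simp at hrs; exact hh0 hrs
  obtain ⟨P, hP⟩ := gcd_dvd_left r s
  obtain ⟨S, hS⟩ := gcd_dvd_right r s
  have hgcd : gcd r s ≠ 0 := fun h0 => hr0 ((gcd_eq_zero_iff _ _).1 h0).1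
  have hcop : IsCoprime P S := by
    have := isCoprime_div_gcd_div_gcd (p := r) hs0
    rwa [EuclideanDomain.div_eq_iff_eq_mul_of_dvd _ _ _ hgcd (gcd_dvd_left _ _) |>.2 hP,
      EuclideanDomain.div_eq_iff_eq_mul_of_dvd _ _ _ hgcd (gcd_dvd_right _ _) |>.2 hS] at this
  have hP0 : P ≠ 0 := by rintro rfl; exact hr0 (by rw [hP, mul_zero])
  have hS0 : S ≠ 0 := by rintro rfl; exact hs0 (by rw [hS, mul_zero])
  have hPS : h * aeval η S = aeval η P := by
    have h1 : aeval η (gcd r s) ≠ 0 := fun h0 => hgcd (hinj (by rw [h0, map_zero]))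
    have h2 : aeval η S ≠ 0 := fun h0 => hS0 (hinj (by rw [h0, map_zero]))
    have h3 : aeval η r = aeval η (gcd r s) * aeval η P := by rw [← map_mul, ← hP]
    have h4 : aeval η s = aeval η (gcd r s) * aeval η S := by rw [← map_mul, ← hS]
    rw [hrs, h3, h4]
    field_simp
  obtain ⟨m, P₁, hXP, rfl⟩ := WfDvdMonoid.max_power_factor hP0 irreducible_X
  obtain ⟨n, S₁, hXS, rfl⟩ := WfDvdMonoid.max_power_factor hS0 irreducible_X
  rw [X_dvd_iff] at hXP hXS
  have hcop' := (hcop.of_mul_left_right).of_mul_right_right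
  simp only [map_mul, map_pow, aeval_X] at hPS
  obtain ⟨l, hl, j, hj⟩ := norm_coprime_case hτ hσ htr hη hcop' hXP hXS
    (h := h * η ^ n * (η ^ m)⁻¹) (g := g * Q ^ n * (Q ^ m)⁻¹)
    (by field_simp; linear_combination hPS)
    (mul_ne_zero (mul_ne_zero hg0 (pow_ne_zero _ hQ)) (inv_ne_zero (pow_ne_zero _ hQ)))
    (by
      simp only [map_mul, map_inv₀, map_pow, ← hg, ← hη]
      field_simp
      ring)
  refine ⟨l, hl, (j : ℤ) + m - n, ?_⟩
  rw [zpow_sub₀ hQ, zpow_add₀ hQ, zpow_natCast, zpow_natCast, zpow_natCast]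
  field_simp at hj ⊢
  linear_combination hj

/-- By the valuation at `e`, the product `c (X - e)(X - e')` is not a norm from `k(√μ)(X)`. -/
theorem no_norm_of_two_linear {k : Type*} [Field k] {μ : k} (hμ : ¬ IsSquare μ) {c e e' : k}
    (hc : c ≠ 0) (he : e ≠ e') {D a b : k[X]} (hD : D ≠ 0)
    (h : C c * ((X - C e) * (X - C e')) * D ^ 2 = a ^ 2 - C μ * b ^ 2) : False := by
  refine inert_no_odd (prime_X_sub_C e) (μ := C μ) (fun a b hab => ?_) (m := C c * (X - C e'))
    ?_ hD (a := a) (b := b) (by rw [← h]; ring)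
  · rw [dvd_iff_isRoot] at hab ⊢
    rw [dvd_iff_isRoot]
    simp only [IsRoot, eval_sub, eval_pow, eval_mul, eval_C] at hab ⊢
    have hb : eval e b = 0 := by
      by_contra hb
      refine hμ ⟨eval e a / eval e b, ?_⟩
      field_simp
      linear_combination -hab
    rw [hb] at hab
    exact ⟨by simpa using hab, hb⟩
  · rw [dvd_iff_isRoot]
    simp [hc, sub_eq_zero, he]

end

/-! ### The conic bundle -/

section

open Polynomial IntermediateField

variable {k Ω : Type*} [Field k] [Field Ω] [Algebra k Ω]

/-- The form of `no_norm_of_two_linear` for a subfield `k(z)` generated by a transcendental `z`. -/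
theorem no_norm_adjoin [CharZero k] {μ : k} (hμ : ¬ IsSquare μ) {z : Ω} (hz : Transcendental k z) {c e : k}
    (hc : c ≠ 0) (he : e ≠ 0) {p q : Ω} (hp : p ∈ adjoin k {z}) (hq : q ∈ adjoin k {z})
    (h : algebraMap k Ω c * (z ^ 2 - algebraMap k Ω e ^ 2) = p ^ 2 - algebraMap k Ω μ * q ^ 2) :
    False := by
  have hinj : Function.Injective (aeval z : k[X] → Ω) := transcendental_iff_injective.1 hz
  have key : ∀ a ∈ adjoin k {z}, ∃ r s : k[X], s ≠ 0 ∧ a * aeval z s = aeval z r := by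
    intro a ha
    obtain ⟨r, s, rfl⟩ := (mem_adjoin_simple_iff k a).1 ha
    by_cases hs : s = 0
    · exact ⟨0, 1, one_ne_zero, by simp [hs]⟩
    · refine ⟨r, s, hs, div_mul_cancel₀ _ fun h0 => hs (hinj (by rw [h0, map_zero]))⟩
  obtain ⟨r₁, s₁, hs₁, h₁⟩ := key p hp
  obtain ⟨r₂, s₂, hs₂, h₂⟩ := key q hq
  refine no_norm_of_two_linear hμ hc (e := e) (e' := -e) (D := s₁ * s₂) (a := r₁ * s₂) (b := r₂ * s₁)
    (fun h0 => he (by linear_combination h0 / 2)) (mul_ne_zero hs₁ hs₂) (hinj ?_)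
  simp only [map_mul, map_sub, map_pow, aeval_C, aeval_X, map_neg, ← h₁, ← h₂]
  linear_combination (aeval z s₁ * aeval z s₂) ^ 2 * h

theorem map_eq_of_mem_adjoin {σ : Ω →+* Ω} (hσk : ∀ a : k, σ (algebraMap k Ω a) = algebraMap k Ω a)
    {s : Set Ω} (hs : ∀ a ∈ s, σ a = a) {a : Ω} (ha : a ∈ adjoin k s) : σ a = a := by
  induction ha using adjoin_induction with
  | mem a ha => exact hs a ha
  | algebraMap a => exact hσk a
  | add a b _ _ ha hb => rw [map_add, ha, hb]
  | inv a _ ha => rw [map_inv₀, ha]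
  | mul a b _ _ ha hb => rw [map_mul, ha, hb]

/-- In the function field `k(z, x², t)`, `z = y / x`, of the conic bundle
`t² - μ c₁² = μ w² (z² - e₁²)(z² - e₃²) x⁴` no nonzero constant multiple of `z² - e₁²` is a norm from
`√μ`. The ambient field `Ω` contains `ρ = √μ`, and `σ` is the conjugation `ρ ↦ -ρ`. -/
theorem conic_bundle_no_norm [CharZero k] {σ : Ω →+* Ω} (hσ : ∀ a, σ (σ a) = a)
    (hσk : ∀ a : k, σ (algebraMap k Ω a) = algebraMap k Ω a) {μ : k} (hμ : ¬ IsSquare μ) {ρ : Ω}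
    (hρ : ρ ^ 2 = algebraMap k Ω μ) (hσρ : σ ρ = -ρ) {x y t : Ω}
    (hind : AlgebraicIndependent k ![x, y]) (hx : σ x = x) (hy : σ y = y) (ht : σ t = t)
    {w c₁ e₁ e₃ : k} (hw : w ≠ 0) (hc₁ : c₁ ≠ 0) (he₁ : e₁ ≠ 0) (he₃ : e₃ ≠ 0)
    (hrel : t ^ 2 = algebraMap k Ω μ * (algebraMap k Ω w ^ 2
      * (y ^ 2 - algebraMap k Ω e₁ ^ 2 * x ^ 2) * (y ^ 2 - algebraMap k Ω e₃ ^ 2 * x ^ 2)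
      + algebraMap k Ω c₁ ^ 2))
    {h₀ h₁ : Ω} (hh₀ : h₀ ∈ adjoin k {y / x, x ^ 2, t}) (hh₁ : h₁ ∈ adjoin k {y / x, x ^ 2, t})
    {c : k} (hc : c ≠ 0) (h : algebraMap k Ω c * ((y / x) ^ 2 - algebraMap k Ω e₁ ^ 2)
      = h₀ ^ 2 - algebraMap k Ω μ * h₁ ^ 2) : False := by
  have hΩ : CharZero Ω := charZero_of_injective_algebraMap (algebraMap k Ω).injective
  have hμ0 : μ ≠ 0 := by rintro rfl; exact hμ ⟨0, by simp⟩
  have hμ0' : algebraMap k Ω μ ≠ 0 := by simpa using hμ0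
  have hw0' : algebraMap k Ω w ≠ 0 := by simpa using hw
  have hc0' : algebraMap k Ω c ≠ 0 := by simpa using hc
  have hc₁' : algebraMap k Ω c₁ ≠ 0 := by simpa using hc₁
  have hρ0 : ρ ≠ 0 := by rintro rfl; apply hμ0'; rw [← hρ]; simp
  have hx0 : x ≠ 0 := by simpa using hind.ne_zero 0
  obtain ⟨z, hz⟩ : ∃ z, z = y / x := ⟨_, rfl⟩
  have hyz : y = z * x := by rw [hz]; field_simp
  have hztr : Transcendental k z := by
    intro halg
    obtain ⟨S, hxS, hS, hno⟩ := exists_algClosed_trdeg_one hind x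
    exact hno ⟨hxS, hyz ▸ mul_mem (hS z (halg.tower_top S)) hxS⟩
  have hσz : σ z = z := by rw [hz, map_div₀, hx, hy]
  rw [← hz] at hh₀ hh₁ h
  have hze : ∀ e : k, z ^ 2 - algebraMap k Ω e ^ 2 ≠ 0 := by
    intro e h0
    exact hztr ⟨X ^ 2 - C (e ^ 2), X_pow_sub_C_ne_zero (by norm_num) _, by simpa using h0⟩
  have hfix : ∀ a ∈ adjoin k {z}, σ a = a := fun a ha =>
    map_eq_of_mem_adjoin hσk (by rintro _ rfl; exact hσz) ha
  have hfix' : ∀ a ∈ adjoin k {z, x ^ 2, t}, σ a = a := fun a ha =>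
    map_eq_of_mem_adjoin hσk (by
      rintro _ (rfl | rfl | rfl)
      · exact hσz
      · rw [map_pow, hx]
      · exact ht) ha
  obtain ⟨E, hE⟩ : ∃ E, E = adjoin k {z} := ⟨_, rfl⟩
  rw [← hE] at hfix
  have hzE : z ∈ E := hE ▸ mem_adjoin_simple_self k z
  have hρE : ρ ^ 2 ∈ E := hρ ▸ E.algebraMap_mem μ
  obtain ⟨M, hM⟩ : ∃ M, M = quadExt E ρ hρE := ⟨_, rfl⟩
  have hEM : ∀ a ∈ E, a ∈ M := fun a ha => by
    rw [hM, mem_quadExt]; exact ⟨a, ha, 0, zero_mem _, by ring⟩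
  have hρM : ρ ∈ M := by
    rw [hM, mem_quadExt]; exact ⟨0, zero_mem _, 1, one_mem _, by ring⟩
  have hσM : ∀ a : M, σ a ∈ M := by
    rintro ⟨a, ha⟩
    rw [hM, mem_quadExt] at ha
    obtain ⟨p, hp, q, hq, rfl⟩ := ha
    simp only [map_add, map_mul, hσρ, hfix p hp, hfix q hq]
    exact add_mem (hEM p hp) (mul_mem (hEM q hq) (neg_mem hρM))
  -- `M = k(z, ρ)` is stable under `σ`, and `M(η)` contains `z`, `x²` and `t`, where
  -- `η = (t + ρ c₁) / x²` satisfies `η · σ η = q ∈ k(z)`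
  let τ : M →+* M := (σ.comp (algebraMap M Ω)).codRestrict M hσM
  obtain ⟨η, hη⟩ : ∃ η : Ω, η = (t + ρ * algebraMap k Ω c₁) / x ^ 2 := ⟨_, rfl⟩
  have hση : σ η = (t - ρ * algebraMap k Ω c₁) / x ^ 2 := by
    rw [hη, map_div₀, map_add, map_mul, hσk, hσρ, map_pow, hx, ht]; ring
  obtain ⟨q, hq⟩ : ∃ q : Ω, q = algebraMap k Ω μ * algebraMap k Ω w ^ 2
    * (z ^ 2 - algebraMap k Ω e₁ ^ 2) * (z ^ 2 - algebraMap k Ω e₃ ^ 2) := ⟨_, rfl⟩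
  have hq0 : q ≠ 0 := hq ▸ mul_ne_zero (mul_ne_zero (mul_ne_zero hμ0' (pow_ne_zero 2 hw0'))
    (hze e₁)) (hze e₃)
  have hzeE : ∀ e : k, z ^ 2 - algebraMap k Ω e ^ 2 ∈ E := fun e =>
    sub_mem (pow_mem hzE 2) (pow_mem (E.algebraMap_mem e) 2)
  have hqE : q ∈ E := hq ▸ mul_mem (mul_mem (mul_mem (E.algebraMap_mem _)
    (pow_mem (E.algebraMap_mem _) 2)) (hzeE e₁)) (hzeE e₃)
  have hηq : η * σ η = q := by
    rw [hση, hη, hq]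
    rw [hyz] at hrel
    field_simp
    linear_combination hrel - algebraMap k Ω c₁ ^ 2 * hρ
  have hdiff : (η - σ η) * x ^ 2 = 2 * ρ * algebraMap k Ω c₁ := by
    rw [hση, hη]; field_simp; ring
  have hdiff0 : η - σ η ≠ 0 := by
    intro h0
    rw [h0, zero_mul] at hdiff
    exact mul_ne_zero (mul_ne_zero two_ne_zero hρ0) hc₁' hdiff.symm
  have hs : x ^ 2 = 2 * ρ * algebraMap k Ω c₁ / (η - σ η) := by
    rw [← hdiff]; field_simp
  have htη : t = x ^ 2 * (η + σ η) / 2 := by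
    rw [hση, hη]; field_simp; ring
  have hη0 : η ≠ 0 := by rintro h0; rw [h0, zero_mul] at hηq; exact hq0 hηq.symm
  have hση' : σ η = q / η := by rw [← hηq]; field_simp
  have htr : Transcendental M η := by
    intro halg
    obtain ⟨S, hzS, hS, hno⟩ := exists_algClosed_trdeg_one hind z
    have hES : E ≤ S := by
      rw [hE, adjoin_le_iff]; rintro _ rfl; exact hzS
    have hρS : ρ ∈ S := mem_of_sq_mem hS (hES hρE)
    have hMS : M ≤ S := by
      intro a ha
      rw [hM, mem_quadExt] at ha
      obtain ⟨p, hp, q, hq, rfl⟩ := ha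
      exact add_mem (hES hp) (mul_mem (hES hq) hρS)
    let _ : Algebra M S := (inclusion hMS).toAlgebra
    have : IsScalarTower M S Ω := IsScalarTower.of_algebraMap_eq fun _ => rfl
    have hηS : η ∈ S := hS η (halg.tower_top S)
    have hxS : x ∈ S := by
      apply mem_of_sq_mem hS
      rw [hs, hση']
      exact div_mem (mul_mem (mul_mem (ofNat_mem S 2) hρS) (S.algebraMap_mem _))
        (sub_mem hηS (div_mem (hES hqE) hηS))
    exact hno ⟨hxS, hyz ▸ mul_mem hzS hxS⟩
  have hF : adjoin k {z, x ^ 2, t} ≤ (adjoin M {η}).restrictScalars k := by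
    have hηN : η ∈ (adjoin M {η}).restrictScalars k := mem_adjoin_simple_self M η
    have hMN : ∀ a ∈ M, a ∈ (adjoin M {η}).restrictScalars k := fun a ha =>
      (adjoin M {η}).algebraMap_mem ⟨a, ha⟩
    generalize (adjoin M {η}).restrictScalars k = N at hηN hMN
    have hσηN : σ η ∈ N := hση' ▸ div_mem (hMN _ (hEM _ hqE)) hηN
    have hsN : x ^ 2 ∈ N := by
      rw [hs]
      exact div_mem (mul_mem (mul_mem (ofNat_mem N 2) (hMN _ hρM)) (N.algebraMap_mem _))
        (sub_mem hηN hσηN)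
    rw [adjoin_le_iff]
    rintro _ (rfl | rfl | rfl)
    · exact hMN _ (hEM _ hzE)
    · exact hsN
    · rw [htη]
      exact div_mem (mul_mem hsN (add_mem hηN hσηN)) (ofNat_mem N 2)
  have hρN : ρ ∈ adjoin M {η} := (adjoin M {η}).algebraMap_mem ⟨ρ, hρM⟩
  obtain ⟨⟨l, hl⟩, hl0, n, hn⟩ := norm_from_conic (M := M) (σ := σ) (τ := τ) (η := η)
    (Q := ⟨q, hEM q hqE⟩) (fun _ => rfl) hσ htr hηq (fun h0 => hq0 (congrArg Subtype.val h0))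
    (h := h₀ + ρ * h₁) (add_mem (hF hh₀) (mul_mem hρN (hF hh₁)))
    (g := ⟨algebraMap k Ω c * (z ^ 2 - algebraMap k Ω e₁ ^ 2),
      hEM _ (mul_mem (E.algebraMap_mem c) (hzeE e₁))⟩)
    (fun h0 => mul_ne_zero hc0' (hze e₁) (congrArg Subtype.val h0))
    (by
      rw [map_add, map_mul, hσρ, hfix' _ hh₀, hfix' _ hh₁]
      change _ = algebraMap k Ω c * (z ^ 2 - algebraMap k Ω e₁ ^ 2)
      rw [h]
      linear_combination -h₁ ^ 2 * hρ)
  replace hn : algebraMap k Ω c * (z ^ 2 - algebraMap k Ω e₁ ^ 2) = (l * σ l) * q ^ n := by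
    have := congrArg (algebraMap M Ω) hn
    rwa [map_mul, map_mul, map_zpow₀] at this
  rw [hM, mem_quadExt] at hl
  obtain ⟨a, haE, b, hbE, rfl⟩ := hl
  rw [map_add, map_mul, hσρ, hfix a haE, hfix b hbE,
    show (a + b * ρ) * (a + b * -ρ) = a ^ 2 - algebraMap k Ω μ * b ^ 2 by rw [← hρ]; ring] at hn
  rcases Int.even_or_odd' n with ⟨j, rfl | rfl⟩
  -- `n` even: `c (z² - e₁²)` is a norm from `k(z, ρ)`
  · refine no_norm_adjoin hμ hztr hc he₁ (p := a * q ^ j) (q := b * q ^ j)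
      (hE ▸ mul_mem haE (zpow_mem hqE j)) (hE ▸ mul_mem hbE (zpow_mem hqE j)) ?_
    rw [hn, mul_comm 2 j, zpow_mul, zpow_ofNat]
    ring
  -- `n` odd: dividing by `q`, a constant multiple of `z² - e₃²` is the inverse of a norm
  · obtain ⟨a', ha'⟩ : ∃ a', a' = a * q ^ j := ⟨_, rfl⟩
    obtain ⟨b', hb'⟩ : ∃ b', b' = b * q ^ j := ⟨_, rfl⟩
    have ha'E : a' ∈ E := ha' ▸ mul_mem haE (zpow_mem hqE j)
    have hb'E : b' ∈ E := hb' ▸ mul_mem hbE (zpow_mem hqE j)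
    obtain ⟨N, hN⟩ : ∃ N, N = a' ^ 2 - algebraMap k Ω μ * b' ^ 2 := ⟨_, rfl⟩
    have hNE : N ∈ E := hN ▸ sub_mem (pow_mem ha'E 2) (mul_mem (E.algebraMap_mem μ) (pow_mem hb'E 2))
    have hcN : algebraMap k Ω c = N * (algebraMap k Ω μ * algebraMap k Ω w ^ 2
        * (z ^ 2 - algebraMap k Ω e₃ ^ 2)) := by
      apply mul_right_cancel₀ (hze e₁)
      rw [hn, zpow_add₀ hq0, zpow_one, mul_comm 2 j, zpow_mul, zpow_ofNat, hN, ha', hb']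
      linear_combination (a ^ 2 - algebraMap k Ω μ * b ^ 2) * (q ^ j) ^ 2 * hq
    have hN0 : N ≠ 0 := by
      rintro h0; rw [h0, zero_mul] at hcN; exact hc0' hcN
    refine no_norm_adjoin hμ hztr (c := μ * w ^ 2 / c)
      (div_ne_zero (mul_ne_zero hμ0 (pow_ne_zero 2 hw)) hc) he₃ (p := a' / N) (q := b' / N)
      (hE ▸ div_mem ha'E hNE) (hE ▸ div_mem hb'E hNE) ?_
    have h1 : (a' / N) ^ 2 - algebraMap k Ω μ * (b' / N) ^ 2 = 1 / N := by
      field_simp; rw [hN]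
    rw [h1, map_div₀, map_mul, map_pow]
    field_simp
    rw [hcN]; ring

end

/-! ### Rationality of the surface -/

section

variable {k K : Type*} [Field k] [CharZero k] [Field K] [Algebra k K]

/-- The surface is rational. Its equation is rewritten as
`N(t, W (y² + β x²)) = m c² N(x, κ) (x² + m κ²)`, with `N(a, b) = a² - m b²`; dividing by `N(x, κ)`
leads to a quadric `m (a - c κ)(a + c κ) = (b + I c x)(b - I c x)`, ruled by the parameter `θ`. Over
`k(θ)` what remains is a conic with a rational point, so that `K = k(θ, l)` with `l` the slope of the
line through that point. -/
theorem surface_isKRational (i : k) (hi : i ^ 2 = -1) (μ : k) (hμ0 : μ ≠ 0) (u v w : k)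
    (hu : u ≠ 0) (hv : v ≠ 0) (hw : w ≠ 0) (huvw : w ^ 2 = u ^ 2 + v ^ 2) (x y t : K)
    (hind : AlgebraicIndependent k ![x, y])
    (hrel : t ^ 2 = algebraMap k K (w ^ 2 * μ) * x ^ 4
        + 2 * algebraMap k K ((u ^ 2 - v ^ 2) * μ) * x ^ 2 * y ^ 2
        + algebraMap k K (w ^ 2 * μ) * y ^ 4 + algebraMap k K (u ^ 2 * v ^ 2 * w ^ 2 * μ ^ 3))
    (hgen : IntermediateField.adjoin k {x, y, t} = ⊤) : IsKRational k K := by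
  have hK : CharZero K := charZero_of_injective_algebraMap (algebraMap k K).injective
  obtain ⟨I, hIi⟩ : ∃ I : K, I = algebraMap k K i := ⟨_, rfl⟩
  have hI : I ^ 2 = -1 := by rw [hIi, ← map_pow, hi]; simp
  have hIS : ∀ S : IntermediateField k K, I ∈ S := fun S => hIi ▸ S.algebraMap_mem i
  obtain ⟨U, hU⟩ : ∃ U : K, U = algebraMap k K u := ⟨_, rfl⟩
  obtain ⟨V, hV⟩ : ∃ V : K, V = algebraMap k K v := ⟨_, rfl⟩
  obtain ⟨W, hW⟩ : ∃ W : K, W = algebraMap k K w := ⟨_, rfl⟩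
  obtain ⟨m, hm⟩ : ∃ m : K, m = algebraMap k K μ := ⟨_, rfl⟩
  have hUS : ∀ S : IntermediateField k K, U ∈ S := fun S => hU ▸ S.algebraMap_mem u
  have hVS : ∀ S : IntermediateField k K, V ∈ S := fun S => hV ▸ S.algebraMap_mem v
  have hWS : ∀ S : IntermediateField k K, W ∈ S := fun S => hW ▸ S.algebraMap_mem w
  have hmS : ∀ S : IntermediateField k K, m ∈ S := fun S => hm ▸ S.algebraMap_mem μ
  have hU0 : U ≠ 0 := by rw [hU]; simpa using hu
  have hV0 : V ≠ 0 := by rw [hV]; simpa using hv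
  have hW0 : W ≠ 0 := by rw [hW]; simpa using hw
  have hm0 : m ≠ 0 := by rw [hm]; simpa using hμ0
  have hUVW : W ^ 2 = U ^ 2 + V ^ 2 := by
    rw [hU, hV, hW, ← map_pow, huvw]; simp
  replace hrel : t ^ 2 = W ^ 2 * m * x ^ 4 + 2 * ((U ^ 2 - V ^ 2) * m) * x ^ 2 * y ^ 2
        + W ^ 2 * m * y ^ 4 + U ^ 2 * V ^ 2 * W ^ 2 * m ^ 3 := by
    rw [hrel, hU, hV, hW, hm]; simp only [map_mul, map_sub, map_pow]
  have hI0 : I ≠ 0 := by rintro rfl; norm_num at hI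
  have h2S : ∀ S : IntermediateField k K, (2 : K) ∈ S := fun S => ofNat_mem S 2
  have h4S : ∀ S : IntermediateField k K, (4 : K) ∈ S := fun S => ofNat_mem S 4
  -- `-m² κ⁴ = m² W⁴ / 4`, so `x⁴ + m² W⁴ / 4` factors as `(x² - m κ²)(x² + m κ²)`
  obtain ⟨κ, hκ⟩ : ∃ κ : K, κ = (I - 1) * W / 2 := ⟨_, rfl⟩
  have hκS : ∀ S : IntermediateField k K, κ ∈ S := fun S => hκ ▸
    div_mem (mul_mem (sub_mem (hIS S) (one_mem S)) (hWS S)) (h2S S)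
  have hκ2 : κ ^ 2 = -I * W ^ 2 / 2 := by rw [hκ]; linear_combination W ^ 2 / 4 * hI
  have hκ0 : κ ≠ 0 := by
    intro h
    rw [h] at hκ2
    have : I * W ^ 2 ≠ 0 := mul_ne_zero hI0 (pow_ne_zero 2 hW0)
    apply this
    linear_combination 2 * hκ2
  obtain ⟨c, hc⟩ : ∃ c : K, c = 2 * U * V / W := ⟨_, rfl⟩
  have hcS : ∀ S : IntermediateField k K, c ∈ S := fun S => hc ▸
    div_mem (mul_mem (mul_mem (h2S S) (hUS S)) (hVS S)) (hWS S)
  have hc0 : c ≠ 0 := by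
    rw [hc]; exact div_ne_zero (mul_ne_zero (mul_ne_zero two_ne_zero hU0) hV0) hW0
  obtain ⟨β, hβ⟩ : ∃ β : K, β = (U ^ 2 - V ^ 2) / W ^ 2 := ⟨_, rfl⟩
  have hβS : ∀ S : IntermediateField k K, β ∈ S := fun S => hβ ▸
    div_mem (sub_mem (pow_mem (hUS S) 2) (pow_mem (hVS S) 2)) (pow_mem (hWS S) 2)
  -- completing the square in `y²` exhibits a norm form over `k(√μ)`
  have hnorm : t ^ 2 - m * (W * (y ^ 2 + β * x ^ 2)) ^ 2
      = m * c ^ 2 * (x ^ 2 - m * κ ^ 2) * (x ^ 2 + m * κ ^ 2) := by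
    have h4 : W ^ 4 = (U ^ 2 - V ^ 2) ^ 2 + 4 * U ^ 2 * V ^ 2 := by
      rw [show W ^ 4 = (W ^ 2) ^ 2 by ring, hUVW]; ring
    have hκ4 : κ ^ 4 = -W ^ 4 / 4 := by
      rw [show κ ^ 4 = (κ ^ 2) ^ 2 by ring, hκ2]; linear_combination W ^ 4 / 4 * hI
    have : m * c ^ 2 * (x ^ 2 - m * κ ^ 2) * (x ^ 2 + m * κ ^ 2)
      = m * c ^ 2 * (x ^ 4 + m ^ 2 * W ^ 4 / 4) := by linear_combination -m ^ 3 * c ^ 2 * hκ4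
    rw [this, hrel, hc, hβ]
    field_simp
    linear_combination 4 * x ^ 4 * h4
  have hxD : x ^ 2 - m * κ ^ 2 ≠ 0 := by
    intro h
    obtain ⟨S, hyS, hS, hno⟩ := exists_algClosed_trdeg_one hind y
    refine hno ⟨mem_of_sq_mem hS ?_, hyS⟩
    rw [sub_eq_zero.1 h]
    exact mul_mem (hmS S) (pow_mem (hκS S) 2)
  -- with `s` a square root of `m`: `t - s W (y² + β x²) = (x + s κ) (m a + s b)`
  obtain ⟨a, ha⟩ : ∃ a : K, m * a * (x ^ 2 - m * κ ^ 2)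
      = t * x + m * κ * (W * (y ^ 2 + β * x ^ 2)) :=
    ⟨(t * x + m * κ * (W * (y ^ 2 + β * x ^ 2))) / (m * (x ^ 2 - m * κ ^ 2)), by field_simp⟩
  obtain ⟨b, hb⟩ : ∃ b : K, t = m * a * x + m * κ * b := ⟨(t - m * a * x) / (m * κ), by field_simp; ring⟩
  have hb' : -(W * (y ^ 2 + β * x ^ 2)) = b * x + m * a * κ := by
    have : m * κ ≠ 0 := mul_ne_zero hm0 hκ0
    apply mul_left_cancel₀ this
    linear_combination x * hb + ha
  have hab : m * (a - c * κ) * (a + c * κ) = (b + I * c * x) * (b - I * c * x) := by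
    apply mul_left_cancel₀ (mul_ne_zero hm0 hxD)
    rw [show W * (y ^ 2 + β * x ^ 2) = -(b * x + m * a * κ) by rw [← hb']; ring, hb] at hnorm
    linear_combination hnorm + m * (x ^ 2 - m * κ ^ 2) * c ^ 2 * x ^ 2 * hI
  obtain ⟨p, hp⟩ : ∃ p : K, p = b + I * c * x := ⟨_, rfl⟩
  obtain ⟨r, hr⟩ : ∃ r : K, r = a + c * κ := ⟨_, rfl⟩
  have hp0 : p ≠ 0 := by
    intro h0
    rw [← hp, h0, zero_mul] at hab
    obtain ⟨S, hxS, hS, hno⟩ := exists_algClosed_trdeg_one hind x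
    have haS : a ∈ S := by
      rcases mul_eq_zero.1 hab with h | h
      · rw [sub_eq_zero.1 ((mul_eq_zero.1 h).resolve_left hm0)]
        exact mul_mem (hcS S) (hκS S)
      · rw [eq_neg_of_add_eq_zero_left h]
        exact neg_mem (mul_mem (hcS S) (hκS S))
    have hbS : b ∈ S := by
      rw [hp] at h0
      rw [eq_neg_of_add_eq_zero_left h0]
      exact neg_mem (mul_mem (mul_mem (hIS S) (hcS S)) hxS)
    refine hno ⟨hxS, mem_of_sq_mem hS ?_⟩
    have : y ^ 2 = -(b * x + m * a * κ) / W - β * x ^ 2 := by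
      rw [← hb']; field_simp; ring
    rw [this]
    exact sub_mem (div_mem (neg_mem (add_mem (mul_mem hbS hxS) (mul_mem (mul_mem (hmS S) haS)
      (hκS S)))) (hWS S)) (mul_mem (hβS S) (pow_mem hxS 2))
  -- the parameter of one of the two rulings of the quadric `hab`
  obtain ⟨θ, hθ⟩ : ∃ θ : K, a - c * κ = θ * p := ⟨(a - c * κ) / p, by field_simp⟩
  have hbx : b - I * c * x = m * θ * r := by
    apply mul_left_cancel₀ hp0
    rw [← hp, ← hr, hθ] at hab
    linear_combination -hab
  have hx : x = (p - m * θ * r) / (2 * I * c) := by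
    rw [← hbx, hp]; field_simp; ring
  have hbp : b = (p + m * θ * r) / 2 := by rw [← hbx, hp]; ring
  have hap : a = (r + θ * p) / 2 := by rw [← hθ, hr]; ring
  have hκp : 2 * c * κ = r - θ * p := by rw [← hθ, hr]; ring
  have hκp' : κ = W * (r - θ * p) / (4 * U * V) := by
    rw [← hκp, hc]; field_simp; ring
  -- the remaining equation, a conic over `k(θ)` in the coordinates `(p : r : y)`
  have hY : (4 * U * V * y) ^ 2 = ((U + I * V) ^ 2 + 2 * U * V * m * θ ^ 2) * p ^ 2
      - 2 * ((U ^ 2 - V ^ 2) * m * θ) * p * r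
      - m * (2 * U * V - (U - I * V) ^ 2 * m * θ ^ 2) * r ^ 2 := by
    have : y ^ 2 = -(b * x + m * a * κ) / W - β * x ^ 2 := by
      rw [← hb']; field_simp; ring
    have hx' : x = - I * W * (p - m * θ * r) / (4 * U * V) := by
      have h1 : p - m * θ * r = 2 * I * c * x := by rw [← hbx, hp]; ring
      rw [h1, hc]
      field_simp
      linear_combination 4 * x * hI
    rw [mul_pow, this, hbp, hap, hκp', hx', hβ]
    field_simp
    linear_combination (-2 * (p - m * θ * r) ^ 2 * (U ^ 2 - V ^ 2) - 2 * p ^ 2 * V ^ 2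
      - 2 * m ^ 2 * θ ^ 2 * r ^ 2 * V ^ 2) * hI
  obtain ⟨ρ, hρ⟩ : ∃ ρ : K, ρ = (W - U) / V := ⟨_, rfl⟩
  have hρS : ∀ S : IntermediateField k K, ρ ∈ S := fun S => hρ ▸
    div_mem (sub_mem (hWS S) (hUS S)) (hVS S)
  have hρ2 : V * ρ ^ 2 + 2 * U * ρ - V = 0 := by
    rw [hρ]; field_simp; linear_combination hUVW
  obtain ⟨R, hR⟩ : ∃ R : K, r = R * p := ⟨r / p, by field_simp⟩
  have hpR : p * (R - θ) = 2 * c * κ := by rw [hκp, hR]; ring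
  have hRθ : R - θ ≠ 0 := by
    intro h0
    rw [h0, mul_zero] at hpR
    exact mul_ne_zero (mul_ne_zero two_ne_zero hc0) hκ0 hpR.symm
  have hpR' : p = 2 * c * κ / (R - θ) := by rw [← hpR]; field_simp
  have hpS : ∀ S : IntermediateField k K, θ ∈ S → R ∈ S → p ∈ S := fun S hθS hRS => by
    rw [hpR']
    exact div_mem (mul_mem (mul_mem (h2S S) (hcS S)) (hκS S)) (sub_mem hRS hθS)
  have hxS : ∀ S : IntermediateField k K, θ ∈ S → R ∈ S → x ∈ S := fun S hθS hRS => by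
    have := hpS S hθS hRS
    rw [hx, hR]
    exact div_mem (sub_mem this (mul_mem (mul_mem (hmS S) hθS) (mul_mem hRS this)))
      (mul_mem (mul_mem (h2S S) (hIS S)) (hcS S))
  have hbS : ∀ S : IntermediateField k K, θ ∈ S → R ∈ S → b ∈ S := fun S hθS hRS => by
    have := hpS S hθS hRS
    rw [hbp, hR]
    exact div_mem (add_mem this (mul_mem (mul_mem (hmS S) hθS) (mul_mem hRS this))) (h2S S)
  have haS : ∀ S : IntermediateField k K, θ ∈ S → R ∈ S → a ∈ S := fun S hθS hRS => by
    have := hpS S hθS hRS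
    rw [hap, hR]
    exact div_mem (add_mem (mul_mem hRS this) (mul_mem hθS this)) (h2S S)
  -- `θ` and `R` cannot both lie in a relatively algebraically closed subfield without `x, y`
  have hindR : ∀ S : IntermediateField k K, (∀ a : K, IsAlgebraic S a → a ∈ S) →
      ¬ (x ∈ S ∧ y ∈ S) → θ ∈ S → R ∈ S → False := by
    intro S hS hno hθS hRS
    refine hno ⟨hxS S hθS hRS, mem_of_sq_mem hS ?_⟩
    have : y ^ 2 = -(b * x + m * a * κ) / W - β * x ^ 2 := by
      rw [← hb']; field_simp; ring
    rw [this]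
    exact sub_mem (div_mem (neg_mem (add_mem (mul_mem (hbS S hθS hRS) (hxS S hθS hRS))
      (mul_mem (mul_mem (hmS S) (haS S hθS hRS)) (hκS S)))) (hWS S))
      (mul_mem (hβS S) (pow_mem (hxS S hθS hRS) 2))
  obtain ⟨Υ, hΥ⟩ : ∃ Υ : K, 4 * U * V * y = Υ * p := ⟨4 * U * V * y / p, by field_simp⟩
  obtain ⟨ε, hε⟩ : ∃ ε : K, ε = -m * (2 * U * V - (U - I * V) ^ 2 * m * θ ^ 2) := ⟨_, rfl⟩
  obtain ⟨Y₀, hY₀⟩ : ∃ Y₀ : K, Y₀ = (U + I * V) + (U - I * V) * m * ρ * θ ^ 2 := ⟨_, rfl⟩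
  have hconic : Υ ^ 2 = ((U + I * V) ^ 2 + 2 * U * V * m * θ ^ 2)
      - 2 * ((U ^ 2 - V ^ 2) * m * θ) * R + ε * R ^ 2 := by
    apply mul_right_cancel₀ (pow_ne_zero 2 hp0)
    rw [hΥ, hR] at hY
    rw [hε]
    linear_combination hY
  -- the rational point `(R, Υ) = (ρ θ, Y₀)` of the conic over `k(θ)`
  have hpoint : Y₀ ^ 2 = ((U + I * V) ^ 2 + 2 * U * V * m * θ ^ 2)
      - 2 * ((U ^ 2 - V ^ 2) * m * θ) * (ρ * θ) + ε * (ρ * θ) ^ 2 := by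
    rw [hε, hY₀]
    linear_combination 2 * m * θ ^ 2 * U * hρ2 - 2 * V ^ 2 * m * ρ * θ ^ 2 * hI
  have hRρ : R - ρ * θ ≠ 0 := by
    intro h0
    obtain ⟨S, hθS, hS, hno⟩ := exists_algClosed_trdeg_one hind θ
    refine hindR S hS hno hθS ?_
    rw [sub_eq_zero.1 h0]
    exact mul_mem (hρS S) hθS
  obtain ⟨l, hl⟩ : ∃ l : K, Υ = l * (R - ρ * θ) + Y₀ := ⟨(Υ - Y₀) / (R - ρ * θ), by field_simp; ring⟩
  have hline : R * (l ^ 2 - ε) = l ^ 2 * (ρ * θ) - 2 * l * Y₀ - 2 * ((U ^ 2 - V ^ 2) * m * θ)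
      + ε * (ρ * θ) := by
    apply mul_right_cancel₀ hRρ
    rw [hl] at hconic
    linear_combination hconic - hpoint
  -- otherwise `θ` would be a root of a polynomial over `k` with nonzero constant term
  have hlε : l ^ 2 - ε ≠ 0 := by
    intro h0
    have h1 : l * Y₀ = ε * ρ * θ - (U ^ 2 - V ^ 2) * m * θ := by
      have h2 : l ^ 2 = ε := sub_eq_zero.1 h0
      rw [h0, mul_zero, h2] at hline
      linear_combination hline / 2
    have h2 : ε * Y₀ ^ 2 - (ε * ρ - (U ^ 2 - V ^ 2) * m) ^ 2 * θ ^ 2 = 0 := by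
      rw [show ε * Y₀ ^ 2 = (l * Y₀) ^ 2 by rw [mul_pow, sub_eq_zero.1 h0], h1]; ring
    have hθalg : IsAlgebraic k θ := by
      let E : Polynomial k := -.C μ * (2 * .C u * .C v - (.C u - .C i * .C v) ^ 2 * .C μ * .X ^ 2)
      refine ⟨E * ((.C u + .C i * .C v) + (.C u - .C i * .C v) * .C μ * .C ((w - u) / v) * .X ^ 2) ^ 2
        - (E * .C ((w - u) / v) - (.C u ^ 2 - .C v ^ 2) * .C μ) ^ 2 * .X ^ 2, ?_, ?_⟩
      · intro h3
        have h4 := congrArg (Polynomial.eval 0) h3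
        simp [E] at h4
        rcases h4 with (h4 | h4 | h4) | h4
        · exact hμ0 h4
        · exact hu h4
        · exact hv h4
        · apply pow_ne_zero 2 hw
          linear_combination huvw + (u - i * v) * h4 + v ^ 2 * hi
      · rw [← h2, hε, hY₀, hρ]
        simp [E, hU, hV, hW, hm, hIi, map_ofNat]
    obtain ⟨S, hRS, hS, hno⟩ := exists_algClosed_trdeg_one hind R
    exact hindR S hS hno (hS θ (hθalg.tower_top S)) hRS
  refine isKRational_of_adjoin_pair hind (a := θ) (b := l) ?_
  obtain ⟨S, hS⟩ : ∃ S, S = IntermediateField.adjoin k {θ, l} := ⟨_, rfl⟩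
  have hθS : θ ∈ S := hS ▸ IntermediateField.subset_adjoin k _ (by simp)
  have hlS : l ∈ S := hS ▸ IntermediateField.subset_adjoin k _ (by simp)
  have hbS' : U - I * V ∈ S := sub_mem (hUS S) (mul_mem (hIS S) (hVS S))
  have hY₀S : Y₀ ∈ S := hY₀ ▸ add_mem (add_mem (hUS S) (mul_mem (hIS S) (hVS S)))
    (mul_mem (mul_mem (mul_mem hbS' (hmS S)) (hρS S)) (pow_mem hθS 2))
  have hεS : ε ∈ S := hε ▸ mul_mem (neg_mem (hmS S)) (sub_mem (mul_mem (mul_mem (h2S S) (hUS S))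
    (hVS S)) (mul_mem (mul_mem (pow_mem hbS' 2) (hmS S)) (pow_mem hθS 2)))
  have hRS : R ∈ S := by
    rw [eq_div_of_mul_eq hlε hline]
    exact div_mem (add_mem (sub_mem (sub_mem (mul_mem (pow_mem hlS 2) (mul_mem (hρS S) hθS))
      (mul_mem (mul_mem (h2S S) hlS) hY₀S)) (mul_mem (h2S S) (mul_mem (mul_mem (sub_mem
      (pow_mem (hUS S) 2) (pow_mem (hVS S) 2)) (hmS S)) hθS))) (mul_mem hεS (mul_mem (hρS S) hθS)))
      (sub_mem (pow_mem hlS 2) hεS)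
  have hΥS : Υ ∈ S := hl ▸ add_mem (mul_mem hlS (sub_mem hRS (mul_mem (hρS S) hθS))) hY₀S
  have hyS : y ∈ S := by
    have : y = Υ * p / (4 * U * V) := by rw [← hΥ]; field_simp
    rw [this]
    exact div_mem (mul_mem hΥS (hpS S hθS hRS)) (mul_mem (mul_mem (h4S S) (hUS S)) (hVS S))
  have htS : t ∈ S := hb ▸ add_mem (mul_mem (mul_mem (hmS S) (haS S hθS hRS)) (hxS S hθS hRS))
    (mul_mem (mul_mem (hmS S) (hκS S)) (hbS S hθS hRS))
  rw [← hS, eq_top_iff, ← hgen, IntermediateField.adjoin_le_iff]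
  rintro _ (rfl | rfl | rfl)
  · exact hxS S hθS hRS
  · exact hyS
  · exact htS

end

/-! ### The fixed field -/

section

open IntermediateField

variable {k K : Type*} [Field k] [Field K] [Algebra k K]

theorem mem_fixedField_closure_singleton {ν : K ≃ₐ[k] K} {a : K} :
    a ∈ fixedField (Subgroup.closure {ν}) ↔ ν a = a := by
  rw [mem_fixedField_iff]
  refine ⟨fun h => h ν (Subgroup.subset_closure rfl), fun h g hg => ?_⟩
  have hle : Subgroup.closure {ν} ≤ MulAction.stabilizer (K ≃ₐ[k] K) a := by
    rw [Subgroup.closure_le]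
    rintro _ rfl
    exact h
  exact hle hg

/-- The fixed field of `ν` is contained in `k(y / x, x², t)`: writing `K` as `F + F x` with
`F = k(y / x, x², t)` fixed by `ν`, the involution acts as `p + q x ↦ p - q x`. -/
theorem mem_adjoin_of_fixed [CharZero K] {x y t : K} (hx0 : x ≠ 0)
    (hgen : adjoin k {x, y, t} = ⊤) {ν : K ≃ₐ[k] K}
    (hνx : ν x = -x) (hνy : ν y = -y) (hνt : ν t = t) {a : K} (ha : ν a = a) :
    a ∈ adjoin k {y / x, x ^ 2, t} := by
  obtain ⟨F, hF⟩ : ∃ F, F = adjoin k {y / x, x ^ 2, t} := ⟨_, rfl⟩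
  have hzF : y / x ∈ F := hF ▸ subset_adjoin k _ (by simp)
  have hsF : x ^ 2 ∈ F := hF ▸ subset_adjoin k _ (by simp)
  have htF : t ∈ F := hF ▸ subset_adjoin k _ (by simp)
  have hfix : ∀ b ∈ F, ν b = b := fun b hb =>
    map_eq_of_mem_adjoin (σ := (ν : K →+* K)) (fun c => ν.commutes c) (by
      rintro _ (rfl | rfl | rfl)
      · simp [hνx, hνy]
      · simp [hνx]
      · exact hνt) (hF ▸ hb)
  have htop : adjoin k {x, y, t} ≤ quadExt F x hsF := by
    rw [adjoin_le_iff]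
    rintro _ (rfl | rfl | rfl)
    · exact ⟨0, zero_mem _, 1, one_mem _, by ring⟩
    · exact ⟨0, zero_mem _, _, hzF, by field_simp; ring⟩
    · exact ⟨_, htF, 0, zero_mem _, by ring⟩
  obtain ⟨p, hp, q, hq, rfl⟩ := htop (hgen ▸ mem_top : a ∈ adjoin k {x, y, t})
  rw [map_add, map_mul, hfix p hp, hfix q hq, hνx] at ha
  have : q * x = 0 := by linear_combination -ha / 2
  rw [this, add_zero, ← hF]
  exact hp

/-- The fixed field `k(y / x, x², t)` is not rational. Rationality of `K` is used only to see that
`μ` is not a square in `K`, so that `Ω = K(√μ)` is a field. -/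
theorem fixedField_not_isKRational [CharZero k] (i : k) (hi : i ^ 2 = -1) (μ : k)
    (hμ : ¬ IsSquare μ) (u v w : k)
    (hu : u ≠ 0) (hv : v ≠ 0) (hw : w ≠ 0) (huvw : w ^ 2 = u ^ 2 + v ^ 2) (x y t : K)
    (hind : AlgebraicIndependent k ![x, y])
    (hrel : t ^ 2 = algebraMap k K (w ^ 2 * μ) * x ^ 4
        + 2 * algebraMap k K ((u ^ 2 - v ^ 2) * μ) * x ^ 2 * y ^ 2
        + algebraMap k K (w ^ 2 * μ) * y ^ 4 + algebraMap k K (u ^ 2 * v ^ 2 * w ^ 2 * μ ^ 3))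
    (hgen : adjoin k {x, y, t} = ⊤) (hrat : IsKRational k K) (ν : K ≃ₐ[k] K)
    (hνx : ν x = -x) (hνy : ν y = -y) (hνt : ν t = t) :
    ¬ IsKRational k (fixedField (Subgroup.closure {ν})) := by
  rintro ⟨φ⟩
  have hK : CharZero K := charZero_of_injective_algebraMap (algebraMap k K).injective
  have hμ0 : μ ≠ 0 := by rintro rfl; exact hμ ⟨0, by simp⟩
  have hi0 : i ≠ 0 := by rintro rfl; norm_num at hi
  have hμ0' : algebraMap k K μ ≠ 0 := by simpa using hμ0
  have hw0' : algebraMap k K w ≠ 0 := by simpa using hw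
  have hx0 : x ≠ 0 := by simpa using hind.ne_zero 0
  have hab : (u + i * v) * (u - i * v) = w ^ 2 := by linear_combination -v ^ 2 * hi - huvw
  have ha0 : u + i * v ≠ 0 := fun h0 => by
    rw [h0, zero_mul] at hab; exact pow_ne_zero 2 hw hab.symm
  have hb0 : u - i * v ≠ 0 := fun h0 => by
    rw [h0, mul_zero] at hab; exact pow_ne_zero 2 hw hab.symm
  -- the roots `± e₁, ± e₃` of `w² z⁴ + 2 (u² - v²) z² + w²`
  obtain ⟨e₁, he₁⟩ : ∃ e₁, e₁ = i * (u + i * v) / w := ⟨_, rfl⟩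
  obtain ⟨e₃, he₃⟩ : ∃ e₃, e₃ = i * (u - i * v) / w := ⟨_, rfl⟩
  have he₁0 : e₁ ≠ 0 := he₁ ▸ div_ne_zero (mul_ne_zero hi0 ha0) hw
  have he₃0 : e₃ ≠ 0 := he₃ ▸ div_ne_zero (mul_ne_zero hi0 hb0) hw
  have hsub : e₁ - e₃ ≠ 0 := by
    have : e₁ - e₃ = -2 * v / w := by
      rw [he₁, he₃]; field_simp; linear_combination 2 * v * hi
    rw [this]
    exact div_ne_zero (mul_ne_zero (by norm_num) hv) hw
  have hadd : e₁ + e₃ ≠ 0 := by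
    have : e₁ + e₃ = 2 * i * u / w := by rw [he₁, he₃]; field_simp; ring
    rw [this]
    exact div_ne_zero (mul_ne_zero (mul_ne_zero two_ne_zero hi0) hu) hw
  have hsum : w ^ 2 * (e₁ ^ 2 + e₃ ^ 2) = -2 * (u ^ 2 - v ^ 2) := by
    rw [he₁, he₃]; field_simp
    linear_combination (2 * u ^ 2 + 2 * i ^ 2 * v ^ 2 - 2 * v ^ 2) * hi
  have hprod : e₁ ^ 2 * e₃ ^ 2 = 1 := by
    rw [he₁, he₃]; field_simp
    rw [show i ^ 4 * (u + i * v) ^ 2 * (u - i * v) ^ 2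
      = (i ^ 2) ^ 2 * ((u + i * v) * (u - i * v)) ^ 2 by ring, hab, hi]; ring
  obtain ⟨c₁, hc₁⟩ : ∃ c₁, c₁ = u * v * w * μ := ⟨_, rfl⟩
  have hc₁0 : c₁ ≠ 0 := hc₁ ▸ mul_ne_zero (mul_ne_zero (mul_ne_zero hu hv) hw) hμ0
  have hrel' : t ^ 2 = algebraMap k K μ * (algebraMap k K w ^ 2
      * (y ^ 2 - algebraMap k K e₁ ^ 2 * x ^ 2) * (y ^ 2 - algebraMap k K e₃ ^ 2 * x ^ 2)
      + algebraMap k K c₁ ^ 2) := by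
    have h1 := congrArg (algebraMap k K) hsum
    have h2 := congrArg (algebraMap k K) hprod
    rw [hrel, hc₁]
    simp only [map_mul, map_add, map_sub, map_pow, map_neg, map_ofNat, map_one] at h1 h2 ⊢
    linear_combination algebraMap k K μ * x ^ 2 * y ^ 2 * h1
      - algebraMap k K μ * algebraMap k K w ^ 2 * x ^ 4 * h2
  have hzF : y / x ∈ fixedField (Subgroup.closure {ν}) :=
    mem_fixedField_closure_singleton.2 (by simp [hνx, hνy])
  have hsF : x ^ 2 ∈ fixedField (Subgroup.closure {ν}) :=
    mem_fixedField_closure_singleton.2 (by simp [hνx])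
  have htF : t ∈ fixedField (Subgroup.closure {ν}) :=
    mem_fixedField_closure_singleton.2 hνt
  -- a norm from `k(√μ)` of a half of the quartic, up to a constant, exists in the fixed field
  obtain ⟨c, hc, h₀, hh₀, h₁, hh₁, h⟩ : ∃ c : k, c ≠ 0 ∧ ∃ h₀ : K, ν h₀ = h₀ ∧ ∃ h₁ : K, ν h₁ = h₁ ∧
      algebraMap k K c * ((y / x) ^ 2 - algebraMap k K e₁ ^ 2)
        = h₀ ^ 2 - algebraMap k K μ * h₁ ^ 2 := by
    set F := fixedField (Subgroup.closure {ν}) with hF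
    obtain ⟨z, hz⟩ : ∃ z : F, (z : K) = y / x := ⟨⟨_, hzF⟩, rfl⟩
    obtain ⟨s, hs⟩ : ∃ s : F, (s : K) = x ^ 2 := ⟨⟨_, hsF⟩, rfl⟩
    obtain ⟨t', ht'⟩ : ∃ t' : F, (t' : K) = t := ⟨⟨_, htF⟩, rfl⟩
    have hs0 : s ≠ 0 := fun h0 => by
      rw [h0] at hs; exact pow_ne_zero 2 hx0 hs.symm
    have hF4 : (z - algebraMap k F e₁) * (z - algebraMap k F (-e₁))
        * ((z - algebraMap k F e₃) * (z - algebraMap k F (-e₃)))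
        = (algebraMap k F (i * c₁) / (s * algebraMap k F w)) ^ 2
          - algebraMap k F μ * (algebraMap k F i * t' / (algebraMap k F (μ * w) * s)) ^ 2 := by
      apply (algebraMap F K).injective
      have hci : algebraMap k K i ^ 2 = -1 := by rw [← map_pow, hi]; simp
      simp only [map_mul, map_sub, map_pow, map_neg, map_div₀, ← IsScalarTower.algebraMap_apply k F K]
      simp only [IntermediateField.algebraMap_apply, hz, hs, ht']
      field_simp
      rw [hci, hrel']
      ring
    have hne : ∀ e : k, z - algebraMap k F e ≠ 0 := by
      intro e h0
      obtain ⟨S, hxS, hS, hno⟩ := exists_algClosed_trdeg_one hind x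
      refine hno ⟨hxS, ?_⟩
      have h1 := congrArg (algebraMap F K) h0
      simp only [map_sub, ← IsScalarTower.algebraMap_apply k F K] at h1
      simp only [IntermediateField.algebraMap_apply, hz, map_zero] at h1
      have : y = algebraMap k K e * x := by
        rw [← sub_eq_zero.1 h1]; field_simp
      rw [this]
      exact mul_mem (S.algebraMap_mem e) hxS
    obtain ⟨c, hc, α, β, hαβ⟩ := half_product_norm (σ := Fin 2)
      (G := FractionRing (MvPolynomial (Fin 2) k)) hμ (e₁ := e₁) (e₂ := -e₁) (e₃ := e₃) (e₄ := -e₃)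
      (fun h0 => hsub (by rw [h0]; ring)) (fun h0 => hadd (by rw [h0]; ring))
      (fun h0 => hadd (by rw [← h0]; ring)) (fun h0 => hsub (by linear_combination -h0))
      (Z := φ z) (α := φ (algebraMap k F (i * c₁) / (s * algebraMap k F w)))
      (β := φ (algebraMap k F i * t' / (algebraMap k F (μ * w) * s)))
      (by
        simp only [← φ.commutes, ← map_sub, ← map_mul]
        rw [Ne, map_eq_zero]
        exact mul_ne_zero (mul_ne_zero (hne _) (hne _)) (mul_ne_zero (hne _) (hne _)))
      (by
        have := congrArg φ hF4
        simpa only [map_mul, map_sub, map_pow, φ.commutes] using this)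
    refine ⟨c, hc, (φ.symm α : F), mem_fixedField_closure_singleton.1 (φ.symm α).2,
      (φ.symm β : F), mem_fixedField_closure_singleton.1 (φ.symm β).2, ?_⟩
    have h1 := congrArg (fun a => algebraMap F K (φ.symm a)) hαβ
    simp only [map_mul, map_sub, map_pow, φ.symm.commutes, φ.symm_apply_apply,
      ← IsScalarTower.algebraMap_apply k F K, map_neg] at h1
    simp only [IntermediateField.algebraMap_apply, hz] at h1
    rw [← h1]; ring
  replace hh₀ := mem_adjoin_of_fixed hx0 hgen hνx hνy hνt hh₀
  replace hh₁ := mem_adjoin_of_fixed hx0 hgen hνx hνy hνt hh₁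
  obtain ⟨ψ⟩ := hrat
  have hμK : ¬ IsSquare (algebraMap k K μ) := by
    intro hsq
    have := hsq.map ψ
    rw [ψ.commutes] at this
    exact not_isSquare_fractionField (σ := Fin 2) hμ this
  have hfact : Fact (∀ r : K, r ^ 2 ≠ algebraMap k K μ + 0 * r) :=
    ⟨fun r hr => hμK ⟨r, by rw [← sq, hr]; ring⟩⟩
  let Ω := QuadraticAlgebra K (algebraMap k K μ) 0
  let f : K →ₐ[k] Ω := IsScalarTower.toAlgHom k K Ω
  have hfk : ∀ a : k, f (algebraMap k K a) = algebraMap k Ω a := f.commutes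
  have hσf : ∀ a : K, starRingEnd Ω (f a) = f a := by
    intro a
    apply QuadraticAlgebra.ext <;> simp [f, Ω, starRingEnd_apply]
  have hadj : ∀ a ∈ adjoin k {y / x, x ^ 2, t}, f a ∈ adjoin k {f y / f x, f x ^ 2, f t} := by
    intro a ha
    have h1 : f a ∈ (adjoin k {y / x, x ^ 2, t}).map f := ⟨a, ha, rfl⟩
    rwa [adjoin_map, Set.image_insert_eq, Set.image_insert_eq, Set.image_singleton, map_div₀,
      map_pow] at h1
  refine conic_bundle_no_norm (σ := starRingEnd Ω) (fun a => star_star a)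
    (fun a => by rw [← hfk, hσf]) hμ (ρ := QuadraticAlgebra.omega)
    (by rw [sq, QuadraticAlgebra.omega_mul_omega_eq_mk]; rfl)
    (by apply QuadraticAlgebra.ext <;> simp [Ω, starRingEnd_apply])
    (x := f x) (y := f y) (t := f t) ?_ (hσf x) (hσf y) (hσf t) hw hc₁0 he₁0 he₃0 ?_
    (hadj _ hh₀) (hadj _ hh₁) hc ?_
  · have hfun : ![f x, f y] = f ∘ ![x, y] := by funext j; fin_cases j <;> rfl
    rw [hfun]
    exact hind.map' (f := f) f.toRingHom.injective
  · have := congrArg f hrel'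
    simpa only [map_mul, map_add, map_sub, map_pow, hfk] using this
  · have := congrArg f h
    simpa only [map_mul, map_sub, map_pow, map_div₀, hfk] using this

end

/-- With `C = u²v²w²μ³` and `ν` the involution `ν(x) = −x, ν(y) = −y, ν(t) = t` (the
involution of type 1 in Table 2), the fixed field of `⟨ν⟩` acting on `K_C` is not
`k`-rational, although `K_C` itself is `k`-rational. -/
theorem delPezzo2_quartic_quotient_type1_not_rational
    (k : Type*) [Field k] [CharZero k]
    (i : k) (hi : i ^ 2 = -1)
    (μ : k) (hμ : ¬ IsSquare μ)
    (u v w : k) (hu : u ≠ 0) (hv : v ≠ 0) (hw : w ≠ 0)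
    (huvw : w ^ 2 = u ^ 2 + v ^ 2)
    (A B C : k)
    (hA : A = w ^ 2 * μ) (hB : B = (u ^ 2 - v ^ 2) * μ)
    (hC : C = u ^ 2 * v ^ 2 * w ^ 2 * μ ^ 3)
    -- K is the function field of the surface: K = k(x, y, t) with t² = f_C(x, y)
    (K : Type*) [Field K] [Algebra k K]
    (x y t : K)
    (hind : AlgebraicIndependent k ![x, y])
    (hrel : t ^ 2 = algebraMap k K A * x ^ 4 + 2 * algebraMap k K B * x ^ 2 * y ^ 2
        + algebraMap k K A * y ^ 4 + algebraMap k K C)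
    (hgen : IntermediateField.adjoin k {x, y, t} = ⊤)
    (ht : t ∉ IntermediateField.adjoin k ({x, y} : Set K))
    -- ν is the k-automorphism of order 2 with ν(x) = −x, ν(y) = −y, ν(t) = t
    (ν : K ≃ₐ[k] K)
    (hνx : ν x = -x) (hνy : ν y = -y) (hνt : ν t = t) :
    ¬ IsKRational k (IntermediateField.fixedField (Subgroup.closure {ν})) ∧
      IsKRational k K := by
  subst hA hB hC
  have hμ0 : μ ≠ 0 := by rintro rfl; exact hμ ⟨0, by simp⟩
  have hrat := surface_isKRational i hi μ hμ0 u v w hu hv hw huvw x y t hind hrel hgen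
  exact ⟨fixedField_not_isKRational i hi μ hμ u v w hu hv hw huvw x y t hind hrel hgen hrat ν
    hνx hνy hνt, hrat⟩
end

section
/- With C = u²v²w²μ³, let g₁ and g₂ be the k-automorphisms of K_C of order 2 determined by g₁(X) = −X, g₁(Y) = Y, g₁(T) = −T and g₂(X) = X, g₂(Y) = −Y, g₂(T) = −T, so that ⟨g₁, g₂⟩ ≅ C₂ × C₂. Then the fixed field of ⟨g₁, g₂⟩ acting on K_C is k-rational. -/
/-!
The invariants of `⟨g₁, g₂⟩` are generated by `x²`, `y²` and `xyt`: if a subfield `E` of invariants contains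
these three elements, then `K = E + E x + E y + E xy`, and an element of this form is invariant only
if it lies in `E` (`exists_eq_of_sq_mem`, `mem_of_fixed`).

Put `z = y² / x²`, `s = yt / x` and `δ = iuvμ`. Then `C = -w²μδ²`, and the relation for `t` becomes
`s² / (w²μ) = z (p x⁴ - δ²)` with `p = (z + 1)² - (4v²/w²) z`, a conic over `k(z)` in the
coordinates `s, x²`. Its quaternion algebra is `(μz, p)`. As `(z, p)` splits, the conic is isomorphic to
`a² - μb² = p`, so the fixed field is the function field of a quadric surface over `k` with a
rational point at infinity. Projection from this point gives, up to affine changes of coordinates,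
the generators
`m = y² / (δ + x² + y²)` and `n = s / (δ + x² + y²)`.
They generate the field because
`z (1 - 2m) = 2m - (4v²/w²) m² - n² / (w²μ)` (`quadric_relation`)
recovers `z`, and then `x² = δ / (z/m - z - 1)`.

Finally `K` is algebraic over `k(m, n)` and has transcendence degree at least 2 over `k`, so `m, n`
are algebraically independent.
-/

/-- If a subfield `E` of `K = k(x, y, t)` contains `x²`, `y²` and `xyt`, then `1, x, y, xy` span
`K` over `E`. -/
lemma exists_eq_of_sq_mem {k K : Type*} [Field k] [Field K] [Algebra k K]
    (E : IntermediateField k K) {x y t : K} (hx0 : x ≠ 0) (hy0 : y ≠ 0)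
    (hx : x ^ 2 ∈ E) (hy : y ^ 2 ∈ E) (hs : x * y * t ∈ E)
    (hgen : IntermediateField.adjoin k {x, y, t} = ⊤) (z : K) :
    ∃ a ∈ E, ∃ b ∈ E, ∃ c ∈ E, ∃ d ∈ E, z = a + b * x + c * y + d * (x * y) := by
  have hxa : IsIntegral E x := by
    refine IsIntegral.of_pow (n := 2) (by norm_num) ?_
    exact isIntegral_algebraMap (R := E) (x := ⟨x ^ 2, hx⟩)
  have hya : IsIntegral E y := by
    refine IsIntegral.of_pow (n := 2) (by norm_num) ?_
    exact isIntegral_algebraMap (R := E) (x := ⟨y ^ 2, hy⟩)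
  have htop : ∀ z : K, z ∈ IntermediateField.adjoin E ({x, y} : Set K) := by
    intro z
    have hxm : x ∈ IntermediateField.adjoin E ({x, y} : Set K) :=
      IntermediateField.subset_adjoin _ _ (by simp)
    have hym : y ∈ IntermediateField.adjoin E ({x, y} : Set K) :=
      IntermediateField.subset_adjoin _ _ (by simp)
    have hsm : x * y * t ∈ IntermediateField.adjoin E ({x, y} : Set K) :=
      (IntermediateField.adjoin E ({x, y} : Set K)).algebraMap_mem ⟨x * y * t, hs⟩
    have htm : t ∈ IntermediateField.adjoin E ({x, y} : Set K) := by
      have h : t = x * y * t / (x * y) := by field_simp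
      rw [h]
      exact div_mem hsm (mul_mem hxm hym)
    have hle : IntermediateField.adjoin k {x, y, t} ≤
        (IntermediateField.adjoin E ({x, y} : Set K)).restrictScalars k := by
      rw [IntermediateField.adjoin_le_iff]
      rintro _ (rfl | rfl | rfl)
      exacts [hxm, hym, htm]
    rw [hgen] at hle
    exact hle IntermediateField.mem_top
  have hz : z ∈ Algebra.adjoin E ({x, y} : Set K) := by
    rw [← IntermediateField.adjoin_toSubalgebra_of_isAlgebraic]
    · exact htop z
    · rintro _ (rfl | rfl)
      exacts [hxa.isAlgebraic, hya.isAlgebraic]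
  clear htop
  induction hz using Algebra.adjoin_induction with
  | mem z hz =>
    rcases hz with rfl | rfl
    · exact ⟨0, zero_mem _, 1, one_mem _, 0, zero_mem _, 0, zero_mem _, by ring⟩
    · exact ⟨0, zero_mem _, 0, zero_mem _, 1, one_mem _, 0, zero_mem _, by ring⟩
  | algebraMap r =>
    exact ⟨r, r.2, 0, zero_mem _, 0, zero_mem _, 0, zero_mem _, by
      simp [IntermediateField.algebraMap_apply]⟩
  | add p q _ _ hp hq =>
    obtain ⟨a, ha, b, hb, c, hc, d, hd, rfl⟩ := hp
    obtain ⟨a', ha', b', hb', c', hc', d', hd', rfl⟩ := hq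
    exact ⟨a + a', add_mem ha ha', b + b', add_mem hb hb', c + c', add_mem hc hc',
      d + d', add_mem hd hd', by ring⟩
  | mul p q _ _ hp hq =>
    obtain ⟨a, ha, b, hb, c, hc, d, hd, rfl⟩ := hp
    obtain ⟨a', ha', b', hb', c', hc', d', hd', rfl⟩ := hq
    refine ⟨a * a' + b * b' * x ^ 2 + c * c' * y ^ 2 + d * d' * (x ^ 2 * y ^ 2), ?_,
      a * b' + b * a' + (c * d' + d * c') * y ^ 2, ?_,
      a * c' + c * a' + (b * d' + d * b') * x ^ 2, ?_,
      a * d' + d * a' + b * c' + c * b', ?_, by ring⟩ <;>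
    apply_rules [E.add_mem, E.mul_mem]

/-- A subfield `E` of invariants that contains `x²`, `y²` and `xyt` contains every invariant:
in `a + b x + c y + d xy` the last three terms are eigenvectors of `g₁` and `g₂` for nontrivial
characters, so they cancel in an invariant element. -/
lemma mem_of_fixed {k K : Type*} [Field k] [CharZero k] [Field K] [Algebra k K]
    (E : IntermediateField k K) {x y t : K} (hx0 : x ≠ 0) (hy0 : y ≠ 0)
    (hx : x ^ 2 ∈ E) (hy : y ^ 2 ∈ E) (hs : x * y * t ∈ E)
    (hgen : IntermediateField.adjoin k {x, y, t} = ⊤)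
    (g₁ g₂ : K ≃ₐ[k] K)
    (hg1x : g₁ x = -x) (hg1y : g₁ y = y) (hg2x : g₂ x = x) (hg2y : g₂ y = -y)
    (hE1 : ∀ a ∈ E, g₁ a = a) (hE2 : ∀ a ∈ E, g₂ a = a)
    {z : K} (h1 : g₁ z = z) (h2 : g₂ z = z) : z ∈ E := by
  have : CharZero K := charZero_of_injective_algebraMap (algebraMap k K).injective
  obtain ⟨a, ha, b, hb, c, hc, d, hd, rfl⟩ := exists_eq_of_sq_mem E hx0 hy0 hx hy hs hgen z
  simp only [map_add, map_mul, hg1x, hg1y, hE1 a ha, hE1 b hb, hE1 c hc, hE1 d hd] at h1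
  simp only [map_add, map_mul, hg2x, hg2y, hE2 a ha, hE2 b hb, hE2 c hc, hE2 d hd] at h2
  have hbx : b * x + d * (x * y) = 0 := by
    have : (2 : K) * (b * x + d * (x * y)) = 0 := by linear_combination -h1
    simpa using this
  have hcy : c * y + d * (x * y) = 0 := by
    have : (2 : K) * (c * y + d * (x * y)) = 0 := by linear_combination -h2
    simpa using this
  have hc0 : c + d * x = 0 := by
    have : y * (c + d * x) = 0 := by linear_combination hcy
    simpa [hy0] using this
  -- `g₁ (c + d x) = c - d x`, so `c` and `d x` both vanish.
  have hc1 : c - d * x = 0 := by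
    have := congrArg g₁ hc0
    simp only [map_add, map_mul, hg1x, hE1 c hc, hE1 d hd, map_zero] at this
    linear_combination this
  have hdx : d * x = 0 := by
    have : (2 : K) * (d * x) = 0 := by linear_combination hc0 - hc1
    simpa using this
  have : a + b * x + c * y + d * (x * y) = a := by linear_combination hbx + y * hc0 - y * hdx
  rwa [this]

/-- The equation of the quadric in the coordinates obtained by projection from its rational
point: it is affine-linear in `z = y² / x²`. -/
lemma quadric_relation {K : Type*} [Field K] {μ v w δ x y t : K}
    (hμ : μ ≠ 0) (hw : w ≠ 0) (hx : x ≠ 0) (hD : δ + x ^ 2 + y ^ 2 ≠ 0)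
    (hrel : t ^ 2 = w ^ 2 * μ * ((x ^ 2 + y ^ 2) ^ 2 - δ ^ 2)
      - 4 * v ^ 2 * μ * (x ^ 2 * y ^ 2)) :
    y ^ 2 / x ^ 2 * (1 - 2 * (y ^ 2 / (δ + x ^ 2 + y ^ 2))) =
      2 * (y ^ 2 / (δ + x ^ 2 + y ^ 2))
        - 4 * v ^ 2 / w ^ 2 * (y ^ 2 / (δ + x ^ 2 + y ^ 2)) ^ 2
        - (y * t / x / (δ + x ^ 2 + y ^ 2)) ^ 2 / (w ^ 2 * μ) := by
  field_simp
  rw [hrel]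
  ring

lemma const_add_sq_ne_zero {k K : Type*} [Field k] [Field K] [Algebra k K] {x y : K}
    (hind : AlgebraicIndependent k ![x, y]) {δ : k} (hδ : δ ≠ 0) (c : k) :
    algebraMap k K δ + x ^ 2 + algebraMap k K c * y ^ 2 ≠ 0 := by
  intro h
  have h0 := algebraicIndependent_iff.1 hind (MvPolynomial.C δ
    + MvPolynomial.X 0 ^ 2 + MvPolynomial.C c * MvPolynomial.X 1 ^ 2) (by simpa using h)
  have := congrArg MvPolynomial.constantCoeff h0
  simp at this
  exact hδ this

/-- Two elements `m, n` such that an extension containing two algebraically independent elements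
is algebraic over `k(m, n)` are themselves algebraically independent. -/
lemma algebraicIndependent_of_isAlgebraic_adjoin {k K : Type*} [Field k] [Field K] [Algebra k K]
    {x y : K} (hind : AlgebraicIndependent k ![x, y]) (m n : K)
    (halg : Algebra.IsAlgebraic (IntermediateField.adjoin k (Set.range ![m, n])) K) :
    AlgebraicIndependent k ![m, n] := by
  have : Algebra.IsAlgebraic (Algebra.adjoin k (Set.range ![m, n])) K := by
    rwa [← IntermediateField.isAlgebraic_adjoin_iff_top]
  exact (Algebra.IsAlgebraic.isTranscendenceBasis_of_lift_le_trdeg_of_finite k ![m, n]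
    hind.lift_cardinalMk_le_trdeg).1


/-- With `C = u²v²w²μ³` and `g₁, g₂` the involutions `g₁ : (x,y,t) ↦ (−x,y,−t)` and
`g₂ : (x,y,t) ↦ (x,−y,−t)`, so that `⟨g₁, g₂⟩ ≅ C₂ × C₂`, the fixed field of `⟨g₁, g₂⟩`
acting on `K_C` is `k`-rational. -/
theorem delPezzo2_quartic_quotient_C2C2_rational
    (k : Type*) [Field k] [CharZero k]
    (i : k) (hi : i ^ 2 = -1)
    (μ : k) (hμ : ¬ IsSquare μ)
    (u v w : k) (hu : u ≠ 0) (hv : v ≠ 0) (hw : w ≠ 0)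
    (huvw : w ^ 2 = u ^ 2 + v ^ 2)
    (A B C : k)
    (hA : A = w ^ 2 * μ) (hB : B = (u ^ 2 - v ^ 2) * μ)
    (hC : C = u ^ 2 * v ^ 2 * w ^ 2 * μ ^ 3)
    -- K is the function field of the surface: K = k(x, y, t) with t² = f_C(x, y)
    (K : Type*) [Field K] [Algebra k K]
    (x y t : K)
    (hind : AlgebraicIndependent k ![x, y])
    (hrel : t ^ 2 = algebraMap k K A * x ^ 4 + 2 * algebraMap k K B * x ^ 2 * y ^ 2
        + algebraMap k K A * y ^ 4 + algebraMap k K C)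
    (hgen : IntermediateField.adjoin k {x, y, t} = ⊤)
    (ht : t ∉ IntermediateField.adjoin k ({x, y} : Set K))
    -- g₁, g₂ are the k-automorphisms of order 2 with
    -- g₁(x) = −x, g₁(y) = y, g₁(t) = −t and g₂(x) = x, g₂(y) = −y, g₂(t) = −t
    (g₁ g₂ : K ≃ₐ[k] K)
    (hg1x : g₁ x = -x) (hg1y : g₁ y = y) (hg1t : g₁ t = -t)
    (hg2x : g₂ x = x) (hg2y : g₂ y = -y) (hg2t : g₂ t = -t) :
    IsKRational k (IntermediateField.fixedField (Subgroup.closure {g₁, g₂})) := by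
  have : CharZero K := charZero_of_injective_algebraMap (algebraMap k K).injective
  have hμ0 : μ ≠ 0 := by
    rintro rfl
    exact hμ (IsSquare.zero)
  have hi0 : i ≠ 0 := by
    rintro rfl
    simp at hi
  have hδ0 : i * u * v * μ ≠ 0 := by positivity
  have hx0 : x ≠ 0 := by simpa using hind.ne_zero 0
  have hy0 : y ≠ 0 := by simpa using hind.ne_zero 1
  set δ : K := algebraMap k K (i * u * v * μ) with hδ
  have hδK : δ ≠ 0 := by simpa [hδ] using hδ0
  have hD : δ + x ^ 2 + y ^ 2 ≠ 0 := by
    simpa [hδ] using const_add_sq_ne_zero hind hδ0 1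
  have hD' : δ + x ^ 2 - y ^ 2 ≠ 0 := by
    simpa [hδ, ← sub_eq_add_neg] using const_add_sq_ne_zero hind hδ0 (-1)
  have hμK : algebraMap k K μ ≠ 0 := by simpa using hμ0
  have hwK : algebraMap k K w ≠ 0 := by simpa using hw
  have huvwK : algebraMap k K w ^ 2 = algebraMap k K u ^ 2 + algebraMap k K v ^ 2 := by
    simpa using congrArg (algebraMap k K) huvw
  have hiK : algebraMap k K i ^ 2 = -1 := by
    simpa using congrArg (algebraMap k K) hi
  have hrel' : t ^ 2 = algebraMap k K w ^ 2 * algebraMap k K μ * ((x ^ 2 + y ^ 2) ^ 2 - δ ^ 2)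
      - 4 * algebraMap k K v ^ 2 * algebraMap k K μ * (x ^ 2 * y ^ 2) := by
    rw [hrel, hA, hB, hC, hδ]
    simp only [map_mul, map_pow, map_sub]
    generalize algebraMap k K w = w at *
    generalize algebraMap k K u = u at *
    generalize algebraMap k K v = v at *
    generalize algebraMap k K μ = μ at *
    generalize algebraMap k K i = i at *
    linear_combination (-2 * μ * x ^ 2 * y ^ 2) * huvwK + (u ^ 2 * v ^ 2 * w ^ 2 * μ ^ 3) * hiK
  have hquad := quadric_relation hμK hwK hx0 hD hrel'
  set m : K := y ^ 2 / (δ + x ^ 2 + y ^ 2) with hm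
  set n : K := y * t / x / (δ + x ^ 2 + y ^ 2) with hn
  have hm0 : m ≠ 0 := div_ne_zero (pow_ne_zero _ hy0) hD
  have hm1 : 1 - 2 * m ≠ 0 := by
    have : 1 - 2 * m = (δ + x ^ 2 - y ^ 2) / (δ + x ^ 2 + y ^ 2) := by
      rw [hm]
      field_simp
      ring
    rw [this]
    exact div_ne_zero hD' hD
  set E := IntermediateField.adjoin k (Set.range ![m, n]) with hE
  have hmE : m ∈ E := IntermediateField.subset_adjoin _ _ ⟨0, rfl⟩
  have hnE : n ∈ E := IntermediateField.subset_adjoin _ _ ⟨1, rfl⟩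
  have hδE : δ ∈ E := E.algebraMap_mem _
  have hzE : y ^ 2 / x ^ 2 ∈ E := by
    rw [eq_div_of_mul_eq hm1 hquad]
    have h4 : (4 : K) ∈ E := ofNat_mem E 4
    have h2 : (2 : K) ∈ E := ofNat_mem E 2
    have hvE : algebraMap k K v ∈ E := E.algebraMap_mem _
    have hwE : algebraMap k K w ∈ E := E.algebraMap_mem _
    have hμE : algebraMap k K μ ∈ E := E.algebraMap_mem _
    refine div_mem (sub_mem (sub_mem (mul_mem h2 hmE) ?_) ?_) (sub_mem (one_mem _) (mul_mem h2 hmE))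
    · exact mul_mem (div_mem (mul_mem h4 (pow_mem hvE 2)) (pow_mem hwE 2)) (pow_mem hmE 2)
    · exact div_mem (pow_mem hnE 2) (mul_mem (pow_mem hwE 2) hμE)
  have hxE : x ^ 2 ∈ E := by
    have hP : y ^ 2 / x ^ 2 / m - y ^ 2 / x ^ 2 - 1 = δ / x ^ 2 := by
      rw [hm]
      field_simp
      ring
    have : x ^ 2 = δ / (y ^ 2 / x ^ 2 / m - y ^ 2 / x ^ 2 - 1) := by
      rw [hP]
      field_simp
    rw [this]
    exact div_mem hδE (sub_mem (sub_mem (div_mem hzE hmE) hzE) (one_mem _))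
  have hyE : y ^ 2 ∈ E := by
    have : y ^ 2 = y ^ 2 / x ^ 2 * x ^ 2 := by field_simp
    rw [this]
    exact mul_mem hzE hxE
  have hsE : x * y * t ∈ E := by
    have : x * y * t = n * (δ + x ^ 2 + y ^ 2) * x ^ 2 := by
      rw [hn]
      field_simp
    rw [this]
    exact mul_mem (mul_mem hnE (add_mem (add_mem hδE hxE) hyE)) hxE
  have hle : E ≤ IntermediateField.fixedField (Subgroup.closure {g₁, g₂}) := by
    have hclos : ∀ a : K, g₁ a = a → g₂ a = a →
        a ∈ IntermediateField.fixedField (Subgroup.closure {g₁, g₂}) := by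
      intro a h1 h2
      rw [IntermediateField.mem_fixedField_iff]
      intro f hf
      have : Subgroup.closure {g₁, g₂} ≤ MulAction.stabilizer (K ≃ₐ[k] K) a := by
        rw [Subgroup.closure_le]
        rintro _ (rfl | rfl)
        exacts [h1, h2]
      exact this hf
    have hδ1 : g₁ δ = δ := g₁.commutes _
    have hδ2 : g₂ δ = δ := g₂.commutes _
    rw [hE, IntermediateField.adjoin_le_iff]
    rintro _ ⟨j, rfl⟩
    fin_cases j
    · refine hclos m ?_ ?_
      · simp [hm, hδ1, hg1x, hg1y]
      · simp [hm, hδ2, hg2x, hg2y]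
    · refine hclos n ?_ ?_
      · simp [hn, hδ1, hg1x, hg1y, hg1t]
      · simp [hn, hδ2, hg2x, hg2y, hg2t]
  have hg₁ : g₁ ∈ Subgroup.closure {g₁, g₂} := Subgroup.subset_closure (by simp)
  have hg₂ : g₂ ∈ Subgroup.closure {g₁, g₂} := Subgroup.subset_closure (by simp)
  have heq : IntermediateField.fixedField (Subgroup.closure {g₁, g₂}) = E := by
    refine le_antisymm (fun z hz => ?_) hle
    rw [IntermediateField.mem_fixedField_iff] at hz
    exact mem_of_fixed E hx0 hy0 hxE hyE hsE hgen g₁ g₂ hg1x hg1y hg2x hg2y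
      (fun a ha => (IntermediateField.mem_fixedField_iff _ _).1 (hle ha) g₁ hg₁)
      (fun a ha => (IntermediateField.mem_fixedField_iff _ _).1 (hle ha) g₂ hg₂)
      (hz g₁ hg₁) (hz g₂ hg₂)
  have halg : Algebra.IsAlgebraic E K := by
    refine ⟨fun z => IsIntegral.isAlgebraic ?_⟩
    obtain ⟨a, ha, b, hb, c, hc, d, hd, rfl⟩ :=
      exists_eq_of_sq_mem E hx0 hy0 hxE hyE hsE hgen z
    have hint : ∀ a ∈ E, IsIntegral E a := fun a ha =>
      isIntegral_algebraMap (R := E) (x := ⟨a, ha⟩)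
    have hxi : IsIntegral E x := IsIntegral.of_pow (n := 2) (by norm_num) (hint _ hxE)
    have hyi : IsIntegral E y := IsIntegral.of_pow (n := 2) (by norm_num) (hint _ hyE)
    exact (((hint a ha).add ((hint b hb).mul hxi)).add ((hint c hc).mul hyi)).add
      ((hint d hd).mul (hxi.mul hyi))
  have hmn := algebraicIndependent_of_isAlgebraic_adjoin hind m n halg
  exact ⟨(IntermediateField.equivOfEq heq).trans hmn.aevalEquivField.symm⟩
end
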